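/- arXiv:2404.02005 — 2 statements merged into one kernel-verified Lean document; each statement's English description precedes it below -/
import Mathlib

section
/- Let (R, m) be a 1-dimensional analytically unramified Noetherian local ring with conductor ideal 𝔠 and integral closure R̄. Then the following are equivalent: (i) Ext^i_R(𝔠, R) = 0 for some i > 0; (ii) R is Gorenstein; (iii) Ext^i_R(R̄, R) = 0 for all i > 0; (iv) Ext^i_R(R̄, R) = 0 for some i > 0. -/
open CategoryTheory IsLocalRing

set_option synthInstance.maxHeartbeats 1000000
set_option maxHeartbeats 1000000

noncomputable section

/-- The integral closure `R̄` of `R` in its total ring of fractions, viewed as a type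
(with its canonical `R`-algebra and `R`-module structures). -/
abbrev IntClosure (R : Type) [CommRing R] : Type :=
  ↥(integralClosure R (FractionRing R))

/-- The quotient `R`-module `R̄/R`. -/
abbrev IntClosureQuot (R : Type) [CommRing R] : Type :=
  IntClosure R ⧸ LinearMap.range (Algebra.linearMap R (IntClosure R))

/-- The conductor ideal `𝔠 = Ann_R(R̄/R) = {r : R | r • R̄ ⊆ R}`. -/
def conductorIdeal (R : Type) [CommRing R] : Ideal R :=
  Module.annihilator R (IntClosureQuot R)

/-- A local ring `R` is analytically unramified if its `m`-adic completion is reduced. -/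
def AnalyticallyUnramified (R : Type) [CommRing R] [IsLocalRing R] : Prop :=
  IsReduced (AdicCompletion (maximalIdeal R) R)

/-- `R` is normal: it is reduced and equal to its integral closure `R̄` in its total
ring of fractions. -/
def IsNormalRing (R : Type) [CommRing R] : Prop :=
  IsReduced R ∧ integralClosure R (FractionRing R) = ⊥

/-- `Ext^i_R(M, N)` as a type. -/
abbrev ExtMod (R : Type) [CommRing R] (M : Type) [AddCommGroup M] [Module R M]
    (N : Type) [AddCommGroup N] [Module R N] (i : ℕ) : Type :=
  ↥(((Ext R (ModuleCat.{0} R) i).obj (Opposite.op (ModuleCat.of R M))).obj (ModuleCat.of R N))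

/-- `M` has finite projective dimension over `R`:
`Ext^i_R(M, -)` vanishes for all `i` bigger than some `n`. -/
def HasFiniteProjDim (R : Type) [CommRing R] (M : Type) [AddCommGroup M] [Module R M] : Prop :=
  ∃ n : ℕ, ∀ (N : ModuleCat.{0} R) (i : ℕ), n < i →
    Subsingleton ↥(((Ext R (ModuleCat.{0} R) i).obj (Opposite.op (ModuleCat.of R M))).obj N)

/-- `M` has finite injective dimension over `R`:
`Ext^i_R(-, M)` vanishes for all `i` bigger than some `n`. -/
def HasFiniteInjDim (R : Type) [CommRing R] (M : Type) [AddCommGroup M] [Module R M] : Prop :=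
  ∃ n : ℕ, ∀ (N : ModuleCat.{0} R) (i : ℕ), n < i →
    Subsingleton ↥(((Ext R (ModuleCat.{0} R) i).obj (Opposite.op N)).obj (ModuleCat.of R M))

/-- The depth of an `R`-module `M` over a local ring `(R, m)`: the least `i` such that
`Ext^i_R(R/m, M) ≠ 0` (`⊤` if there is no such `i`), valued in `WithBot (WithTop ℕ)`
for easy comparison with `ringKrullDim`. -/
def moduleDepth (R : Type) [CommRing R] [IsLocalRing R]
    (M : Type) [AddCommGroup M] [Module R M] : WithBot (WithTop ℕ) :=
  sInf { n : WithBot (WithTop ℕ) |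
    ∃ i : ℕ, n = (i : ℕ) ∧ Nontrivial (ExtMod R (ResidueField R) M i) }

/-- A Noetherian local ring is Gorenstein if it has finite injective dimension
as a module over itself. -/
def IsGorensteinLocal (R : Type) [CommRing R] [IsLocalRing R] : Prop :=
  IsNoetherianRing R ∧ HasFiniteInjDim R R

/-- A Noetherian local ring is Cohen–Macaulay if its depth equals its Krull dimension. -/
def IsCohenMacaulayLocal (R : Type) [CommRing R] [IsLocalRing R] : Prop :=
  IsNoetherianRing R ∧ moduleDepth R R = ringKrullDim R

/-- A ring is Cohen–Macaulay if it is Noetherian and all its localizations at primes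
are Cohen–Macaulay local rings. -/
def IsCohenMacaulayRing (A : Type) [CommRing A] : Prop :=
  IsNoetherianRing A ∧ ∀ (p : Ideal A) [p.IsPrime],
    moduleDepth (Localization.AtPrime p) (Localization.AtPrime p) =
      ringKrullDim (Localization.AtPrime p)

/-- Serre's condition `(S2)`: `depth (R_p) ≥ min {2, height p}` for every prime `p`
(`height p` being the dimension of `R_p`). -/
def SerreS2 (R : Type) [CommRing R] : Prop :=
  ∀ (p : Ideal R) [p.IsPrime],
    min 2 (ringKrullDim (Localization.AtPrime p)) ≤
      moduleDepth (Localization.AtPrime p) (Localization.AtPrime p)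

/-- A Noetherian local ring is regular if its maximal ideal can be generated by
`dim R` elements. -/
def IsRegularLocal (A : Type) [CommRing A] [IsLocalRing A] : Prop :=
  IsNoetherianRing A ∧ ∃ s : Finset A, Ideal.span (s : Set A) = maximalIdeal A ∧
    (s.card : WithBot (WithTop ℕ)) = ringKrullDim A

/-- Serre's condition `(R1)`: `R_p` is regular for every prime `p` of height at most `1`. -/
def SerreR1 (R : Type) [CommRing R] : Prop :=
  ∀ (p : Ideal R) [p.IsPrime], ringKrullDim (Localization.AtPrime p) ≤ 1 →
    IsRegularLocal (Localization.AtPrime p)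

/-- The `i`-th local cohomology `H^i_m(M)` of `M` with support in the maximal ideal,
as a type. -/
abbrev localCohMod (R : Type) [CommRing R] [IsLocalRing R] (i : ℕ)
    (M : Type) [AddCommGroup M] [Module R M] : Type :=
  ↥((localCohomology (maximalIdeal R) i).obj (ModuleCat.of R M))

/-- `x : Fin d → R` is a system of parameters for the local ring `(R, m)`:
`d = dim R`, all `x i` lie in `m`, and the ideal they generate is `m`-primary
(its radical is `m`). -/
def IsSystemOfParameters (R : Type) [CommRing R] [IsLocalRing R] {d : ℕ}
    (x : Fin d → R) : Prop :=
  (d : WithBot (WithTop ℕ)) = ringKrullDim R ∧ (∀ i, x i ∈ maximalIdeal R) ∧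
    (Ideal.span (Set.range x)).radical = maximalIdeal R

/-- `E` is an injective hull of the residue field of the local ring `R`:
`E` is injective and contains a copy of `R/m` as an essential submodule. -/
def IsInjectiveHullOfResidueField (R : Type) [CommRing R] [IsLocalRing R]
    (E : Type) [AddCommGroup E] [Module R E] : Prop :=
  Module.Injective R E ∧ ∃ f : ResidueField R →ₗ[R] E, Function.Injective f ∧
    ∀ N : Submodule R E, N ≠ ⊥ → N ⊓ LinearMap.range f ≠ ⊥

section Bridge
open Abelian

/-- vanishing of the derived-category Ext group -/
abbrev EV (R : Type) [CommRing R] (M : Type) [AddCommGroup M] [Module R M]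
    (N : Type) [AddCommGroup N] [Module R N] (i : ℕ) : Prop :=
  Subsingleton (Abelian.Ext (ModuleCat.of R M) (ModuleCat.of R N) i)

variable {R : Type} [CommRing R]

lemma ext_bridge (X Y : ModuleCat.{0} R) (n : ℕ) :
    Subsingleton ↥(((_root_.Ext R (ModuleCat.{0} R) (n+1)).obj (Opposite.op X)).obj Y) ↔
      Subsingleton (Abelian.Ext X Y (n+1)) := by
  let P := ProjectiveResolution.of X
  have h1 : Subsingleton ↥(((_root_.Ext R (ModuleCat.{0} R) (n+1)).obj (Opposite.op X)).obj Y) ↔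
      ∀ f : P.complex.X (n+1) ⟶ Y, P.complex.d (n+2) (n+1) ≫ f = 0 →
        ∃ g : P.complex.X n ⟶ Y, P.complex.d (n+1) n ≫ g = f := by
    rw [← ModuleCat.isZero_iff_subsingleton, (P.isoExt (R := R) (n+1) Y).isZero_iff,
      ← HomologicalComplex.exactAt_iff_isZero_homology,
      HomologicalComplex.exactAt_iff' _ n (n+1) (n+2) (by simp) (by simp),
      ShortComplex.moduleCat_exact_iff]
    rfl
  rw [h1]
  constructor
  · intro h
    refine ⟨fun a b => ?_⟩
    have key : ∀ a : Abelian.Ext X Y (n+1), a = 0 := by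
      intro a
      obtain ⟨f, hf, rfl⟩ := P.extMk_surjective a (n+2) rfl
      rw [P.extMk_eq_zero_iff f (n+2) rfl hf n rfl]
      exact h f hf
    rw [key a, key b]
  · intro h f hf
    exact (P.extMk_eq_zero_iff f (n+2) rfl hf n rfl).1 (Subsingleton.elim _ _)

lemma extMod_iff (M N : Type) [AddCommGroup M] [Module R M] [AddCommGroup N] [Module R N] (n : ℕ)
    (hn : 0 < n) : Subsingleton (ExtMod R M N n) ↔ EV R M N n := by
  obtain ⟨n, rfl⟩ : ∃ k, n = k + 1 := ⟨n - 1, by omega⟩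
  exact ext_bridge _ _ n

section LES
variable {M₁ M₂ M₃ N : Type} [AddCommGroup M₁] [Module R M₁] [AddCommGroup M₂] [Module R M₂]
  [AddCommGroup M₃] [Module R M₃] [AddCommGroup N] [Module R N]

lemma exists_ses (f : M₁ →ₗ[R] M₂) (g : M₂ →ₗ[R] M₃) (hf : Function.Injective f)
    (hg : Function.Surjective g) (hfg : Function.Exact f g) :
    ∃ h : ModuleCat.ofHom f ≫ ModuleCat.ofHom g = 0,
      (ShortComplex.mk (ModuleCat.ofHom f) (ModuleCat.ofHom g) h).ShortExact := by
  have h : ModuleCat.ofHom f ≫ ModuleCat.ofHom g = 0 := by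
    ext x; exact hfg.apply_apply_eq_zero x
  exact ⟨h, ModuleCat.shortComplex_shortExact _ hfg hf hg⟩

lemma EV_third (f : M₁ →ₗ[R] M₂) (g : M₂ →ₗ[R] M₃) (hf : Function.Injective f)
    (hg : Function.Surjective g) (hfg : Function.Exact f g) (n : ℕ)
    (h1 : EV R M₁ N n) (h2 : EV R M₂ N (n+1)) : EV R M₃ N (n+1) := by
  obtain ⟨h, hS⟩ := exists_ses f g hf hg hfg
  refine subsingleton_of_forall_eq 0 fun a => ?_
  obtain ⟨b, rfl⟩ := Ext.contravariant_sequence_exact₃ hS _ a (h2.elim _ _) (n₀ := n) (by omega)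
  rw [h1.elim b 0]; simp

lemma EV_first (f : M₁ →ₗ[R] M₂) (g : M₂ →ₗ[R] M₃) (hf : Function.Injective f)
    (hg : Function.Surjective g) (hfg : Function.Exact f g) (n : ℕ)
    (h2 : EV R M₂ N n) (h3 : EV R M₃ N (n+1)) : EV R M₁ N n := by
  obtain ⟨h, hS⟩ := exists_ses f g hf hg hfg
  refine subsingleton_of_forall_eq 0 fun a => ?_
  obtain ⟨b, rfl⟩ := Ext.contravariant_sequence_exact₁ hS _ a (n₁ := n+1) (by omega) (h3.elim _ _)
  rw [h2.elim b 0]; simp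

lemma EV_middle (f : M₁ →ₗ[R] M₂) (g : M₂ →ₗ[R] M₃) (hf : Function.Injective f)
    (hg : Function.Surjective g) (hfg : Function.Exact f g) (n : ℕ)
    (h1 : EV R M₁ N n) (h3 : EV R M₃ N n) : EV R M₂ N n := by
  obtain ⟨h, hS⟩ := exists_ses f g hf hg hfg
  refine subsingleton_of_forall_eq 0 fun a => ?_
  obtain ⟨b, rfl⟩ := Ext.contravariant_sequence_exact₂ hS _ a (h1.elim _ _)
  rw [h3.elim b 0]; simp

lemma EV_cov (f : M₁ →ₗ[R] M₂) (g : M₂ →ₗ[R] M₃) (hf : Function.Injective f)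
    (hg : Function.Surjective g) (hfg : Function.Exact f g) (hE : Module.Injective R M₂) (n : ℕ)
    (h1 : EV R N M₁ (n+1+1)) : EV R N M₃ (n+1) := by
  obtain ⟨h, hS⟩ := exists_ses f g hf hg hfg
  have := Module.injective_object_of_injective_module R M₂
  refine subsingleton_of_forall_eq 0 fun a => ?_
  obtain ⟨b, rfl⟩ := Ext.covariant_sequence_exact₃ _ hS a (n₁ := n+1+1) rfl (h1.elim _ _)
  rw [Ext.eq_zero_of_injective b]; simp

lemma EV_hom (f : M₁ →ₗ[R] M₂) (g : M₂ →ₗ[R] M₃) (hf : Function.Injective f)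
    (hg : Function.Surjective g) (hfg : Function.Exact f g)
    (h1 : EV R N M₁ 1) (φ : N →ₗ[R] M₃) : ∃ ψ : N →ₗ[R] M₂, g ∘ₗ ψ = φ := by
  obtain ⟨h, hS⟩ := exists_ses f g hf hg hfg
  obtain ⟨b, hb⟩ := Ext.covariant_sequence_exact₃ _ hS (Ext.mk₀ (ModuleCat.ofHom φ)) (n₁ := 1) rfl
    (h1.elim _ _)
  obtain ⟨ψ, rfl⟩ := Ext.homEquiv₀.symm.surjective b
  refine ⟨ψ.hom, ?_⟩
  simp only [Ext.homEquiv₀_symm_apply, Ext.mk₀_comp_mk₀] at hb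
  have := Ext.homEquiv₀.symm.injective hb
  ext x
  exact congrArg (fun q => q.hom x) this

lemma EV_self (n : ℕ) : EV R R N (n+1) := by
  have : Projective (ModuleCat.of R R) := ModuleCat.projective_of_free (Module.Basis.singleton Unit R)
  exact Ext.subsingleton_of_projective _ _ n

lemma EV_congr (e : M₁ ≃ₗ[R] M₂) (n : ℕ) (h : EV R M₁ N n) : EV R M₂ N n := by
  refine EV_middle (M₁ := M₁) (M₃ := PUnit) e.toLinearMap 0 e.injective (fun _ => ⟨0, rfl⟩) ?_ n h ?_
  · intro x; simp
  · refine subsingleton_of_forall_eq 0 fun a => ?_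
    have : (𝟙 (ModuleCat.of R PUnit)) = 0 := by ext
    rw [← Ext.mk₀_id_comp a, this, Ext.mk₀_zero, Ext.zero_comp]

/-- if the identity is a sum of endomorphisms factoring through `M₁` -/
lemma EV_factor {n : ℕ} (h : EV R M₁ N n) (S : AddSubmonoid (M₂ →ₗ[R] M₂))
    (hS : S = AddSubmonoid.closure {t | ∃ (a : M₂ →ₗ[R] M₁) (b : M₁ →ₗ[R] M₂), t = b ∘ₗ a})
    (hid : LinearMap.id ∈ S) : EV R M₂ N n := by
  subst hS
  refine subsingleton_of_forall_eq 0 fun α => ?_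
  have key : ∀ t : M₂ →ₗ[R] M₂,
      t ∈ AddSubmonoid.closure {t | ∃ (a : M₂ →ₗ[R] M₁) (b : M₁ →ₗ[R] M₂), t = b ∘ₗ a} →
      (Ext.mk₀ (ModuleCat.ofHom t)).comp α (zero_add n) = 0 := by
    intro t ht
    induction ht using AddSubmonoid.closure_induction with
    | mem t ht =>
      obtain ⟨a, b, rfl⟩ := ht
      rw [ModuleCat.ofHom_comp, ← Ext.mk₀_comp_mk₀_assoc,
        h.elim ((Ext.mk₀ (ModuleCat.ofHom b)).comp α (zero_add n)) 0, Ext.comp_zero]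
    | zero =>
      have : ModuleCat.ofHom (0 : M₂ →ₗ[R] M₂) = 0 := rfl
      rw [this, Ext.mk₀_zero, Ext.zero_comp]
    | add s t _ _ hs ht =>
      have : ModuleCat.ofHom (s + t) = ModuleCat.ofHom s + ModuleCat.ofHom t := rfl
      rw [this, Ext.mk₀_add, Ext.add_comp, hs, ht, add_zero]
  have := key _ hid
  rwa [ModuleCat.ofHom_id, Ext.mk₀_id_comp] at this

lemma injdim_step (f : M₁ →ₗ[R] M₂) (g : M₂ →ₗ[R] M₃) (hf : Function.Injective f)
    (hg : Function.Surjective g) (hfg : Function.Exact f g) (hE : Module.Injective R M₂) (n : ℕ)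
    (h3 : HasInjectiveDimensionLT (ModuleCat.of R M₃) (n+1)) :
    HasInjectiveDimensionLT (ModuleCat.of R M₁) (n+2) := by
  obtain ⟨h, hS⟩ := exists_ses f g hf hg hfg
  have := Module.injective_object_of_injective_module R M₂
  have h2 : HasInjectiveDimensionLT (ModuleCat.of R M₂) 1 := inferInstance
  exact hS.hasInjectiveDimensionLT_X₁ (n+1) h3 (hasInjectiveDimensionLT_of_ge _ 1 (n+2) (by omega))

end LES
end Bridge
section Hull
variable {R : Type} [CommRing R]

/-- `N` is an essential extension of `D` inside an ambient module -/
def EssIn {I : Type} [AddCommGroup I] [Module R I] (D N : Submodule R I) : Prop :=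
  D ≤ N ∧ ∀ e ∈ N, e ≠ 0 → ∃ r : R, r • e ≠ 0 ∧ r • e ∈ D

lemma exists_retract {I : Type} [AddCommGroup I] [Module R I] (hI : Module.Injective R I)
    (D : Submodule R I) : ∃ N : Submodule R I, EssIn D N ∧
      ∃ ρ : I →ₗ[R] I, (∀ v, ρ v ∈ N) ∧ ∀ v ∈ N, ρ v = v := by
  obtain ⟨N, hDN, hN⟩ := zorn_le_nonempty₀ {N : Submodule R I | EssIn D N} (by
    intro c hc hchain y hy
    refine ⟨sSup c, ⟨(hc hy).1.trans (le_sSup hy), ?_⟩, fun z hz => le_sSup hz⟩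
    intro e he
    rw [Submodule.mem_sSup_of_directed ⟨y, hy⟩ hchain.directedOn] at he
    obtain ⟨z, hz, hez⟩ := he
    exact (hc hz).2 e hez) D ⟨le_rfl, fun e he h0 => ⟨1, by simpa using h0, by simpa using he⟩⟩
  have hNe : EssIn D N := hN.prop
  refine ⟨N, hNe, ?_⟩
  obtain ⟨Q, -, hQ⟩ := zorn_le_nonempty₀ {Q : Submodule R I | Disjoint Q N} (by
    intro c hc hchain y hy
    refine ⟨sSup c, ?_, fun z hz => le_sSup hz⟩
    rw [Set.mem_ofPred_eq, Submodule.disjoint_def]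
    intro e he heN
    rw [Submodule.mem_sSup_of_directed ⟨y, hy⟩ hchain.directedOn] at he
    obtain ⟨z, hz, hez⟩ := he
    exact (Submodule.disjoint_def.1 (hc hz)) e hez heN) ⊥ disjoint_bot_left
  have hQd : Disjoint Q N := hQ.prop
  have hQd' := Submodule.disjoint_def.1 hQd
  let q : N →ₗ[R] I ⧸ Q := Q.mkQ ∘ₗ N.subtype
  have hq : Function.Injective q := by
    rw [← LinearMap.ker_eq_bot, LinearMap.ker_eq_bot']
    intro m hm
    have : (m : I) ∈ Q := by simpa [q] using hm
    exact Subtype.ext (hQd' _ this m.2)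
  obtain ⟨h, hh⟩ := hI.out q hq N.subtype
  have hh' : ∀ v ∈ N, h (Q.mkQ v) = v := fun v hv => hh ⟨v, hv⟩
  have hker : LinearMap.ker (h ∘ₗ Q.mkQ) = Q := by
    have h1 : Q ≤ LinearMap.ker (h ∘ₗ Q.mkQ) := by
      intro v hv
      have : Q.mkQ v = 0 := by simpa using hv
      simp only [LinearMap.mem_ker, LinearMap.comp_apply, this, map_zero]
    refine le_antisymm (hQ.le_of_ge ?_ h1) h1
    change Disjoint _ _
    rw [Submodule.disjoint_def]
    intro v hv hvN
    rw [LinearMap.mem_ker, LinearMap.comp_apply, hh' v hvN] at hv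
    exact hv
  have hNr : N ≤ LinearMap.range (h ∘ₗ Q.mkQ) := fun v hv => ⟨v, hh' v hv⟩
  have hess : EssIn D (LinearMap.range (h ∘ₗ Q.mkQ)) := by
    refine ⟨hNe.1.trans hNr, ?_⟩
    rintro _ ⟨v, rfl⟩ hv0
    have hvQ : v ∉ Q := by
      rw [← hker]; exact hv0
    have hnd : ¬ Disjoint (Q ⊔ R ∙ v) N := by
      intro hd
      have := hQ.le_of_ge hd le_sup_left
      exact hvQ (this (Submodule.mem_sup_right (Submodule.mem_span_singleton_self v)))
    rw [Submodule.disjoint_def] at hnd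
    push Not at hnd
    obtain ⟨n, hn1, hnN, hn0⟩ := hnd
    obtain ⟨q0, hq0, w, hw, rfl⟩ := Submodule.mem_sup.1 hn1
    obtain ⟨r, rfl⟩ := Submodule.mem_span_singleton.1 hw
    have hr : r • (h ∘ₗ Q.mkQ) v = q0 + r • v := by
      have h2 : (h ∘ₗ Q.mkQ) q0 = 0 := by
        rw [← LinearMap.mem_ker, hker]; exact hq0
      have h3 := hh' _ hnN
      rw [← LinearMap.comp_apply, map_add, h2, zero_add, map_smul] at h3
      exact h3
    obtain ⟨s, hs0, hsD⟩ := hNe.2 _ hnN hn0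
    refine ⟨s * r, ?_, ?_⟩
    · rwa [mul_smul, hr]
    · rwa [mul_smul, hr]
  refine ⟨h ∘ₗ Q.mkQ, fun v => hN.le_of_ge hess hNr ⟨v, rfl⟩, hh'⟩

lemma exists_hull (R : Type) [CommRing R] (D : Type) [AddCommGroup D] [Module R D] :
    ∃ (E : Type) (_ : AddCommGroup E) (_ : Module R E) (f : D →ₗ[R] E),
      Function.Injective f ∧ Module.Injective R E ∧
      ∀ e : E, e ≠ 0 → ∃ r : R, r • e ≠ 0 ∧ r • e ∈ LinearMap.range f := by
  obtain ⟨I, _, f, _⟩ := EnoughInjectives.presentation (ModuleCat.of R D)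
  have hI : Module.Injective R I := Module.injective_module_of_injective_object R I
  have injf : Function.Injective f.hom := (ModuleCat.mono_iff_injective f).mp ‹_›
  obtain ⟨N, hN, ρ, hρ, hρ'⟩ := exists_retract hI (LinearMap.range f.hom)
  refine ⟨N, inferInstance, inferInstance, f.hom.codRestrict N fun d => hN.1 ⟨d, rfl⟩, ?_, ?_, ?_⟩
  · intro a b hab
    exact injf (congrArg Subtype.val hab)
  · refine ⟨fun X Y _ _ _ _ i hi g => ?_⟩
    obtain ⟨h, hh⟩ := hI.out i hi (N.subtype ∘ₗ g)
    refine ⟨(ρ ∘ₗ h).codRestrict N fun v => hρ _, fun x => Subtype.ext ?_⟩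
    simp [hh, hρ']
  · intro e he
    obtain ⟨r, h1, ⟨d, hd⟩⟩ := hN.2 e e.2 (fun h => he (Subtype.ext h))
    exact ⟨r, fun h => h1 (congrArg Subtype.val h), ⟨d, Subtype.ext hd⟩⟩
end Hull
section Basics
set_option linter.unusedSectionVars false
variable {R : Type} [CommRing R] [IsLocalRing R] [IsNoetherianRing R]

lemma reduced_of_au (hau : AnalyticallyUnramified R) : IsReduced R := by
  have : IsReduced (AdicCompletion (maximalIdeal R) R) := hau
  exact isReduced_of_injective (algebraMap R (AdicCompletion (maximalIdeal R) R))
    (AdicCompletion.of_injective (maximalIdeal R) R)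

lemma pow_le_of_nzd (hdim : ringKrullDim R = 1) (z : R) (hz : z ∈ nonZeroDivisors R) :
    ∃ N, maximalIdeal R ^ N ≤ Ideal.span {z} := by
  have h1 : Ring.KrullDimLE 1 R := Ring.krullDimLE_iff.2 (by simp [hdim])
  rw [Ring.krullDimLE_one_iff] at h1
  refine Ideal.exists_pow_le_of_le_radical_of_fg ?_ (IsNoetherian.noetherian _)
  rw [Ideal.radical_eq_sInf]
  refine le_sInf ?_
  rintro J ⟨hJ, hJp⟩
  rcases h1 J hJp with h | h
  · exact absurd hz (Set.disjoint_left.1 (Ideal.disjoint_nonZeroDivisors_of_mem_minimalPrimes h)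
      (hJ (Ideal.mem_span_singleton_self z)))
  · exact (IsLocalRing.eq_maximalIdeal h).ge

lemma exists_nzd_of_ann (I : Ideal R) (h : ∀ z : R, (∀ a ∈ I, z * a = 0) → z = 0) :
    ∃ y ∈ I, y ∈ nonZeroDivisors R := by
  by_contra hc
  push Not at hc
  have := Ideal.bot_lt_annihilator_of_disjoint_nonZeroDivisors (I := I)
    (Set.disjoint_left.2 fun a ha => hc a ha)
  refine this.ne' ?_
  rw [eq_bot_iff]
  intro z hz
  rw [Module.mem_annihilator] at hz
  exact h z fun a ha => congrArg Subtype.val (hz ⟨a, ha⟩)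

lemma exists_nzd_max [IsReduced R] (hdim : ringKrullDim R = 1) :
    ∃ x ∈ maximalIdeal R, x ∈ nonZeroDivisors R := by
  apply exists_nzd_of_ann
  intro z hz
  by_cases hzm : z ∈ maximalIdeal R
  · have := hz z hzm
    exact IsReduced.eq_zero z ⟨2, by rw [pow_two, this]⟩
  · exfalso
    have hu : IsUnit z := by simpa using hzm
    have hm : maximalIdeal R = ⊥ := by
      rw [eq_bot_iff]
      intro a ha
      exact hu.mul_right_eq_zero.1 (hz a ha)
    have hf : IsField R := IsLocalRing.isField_iff_maximalIdeal_eq.2 hm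
    rw [ringKrullDim_eq_zero_of_isField hf] at hdim
    exact absurd hdim (by norm_num)

lemma exists_nzd_split [IsReduced R] (I : Ideal R) :
    ∃ a b : R, a ∈ I ∧ (∀ r ∈ I, b * r = 0) ∧ a + b ∈ nonZeroDivisors R := by
  obtain ⟨y, hy, hn⟩ := exists_nzd_of_ann (I ⊔ Module.annihilator R I) (by
    intro z hz
    have h1 : z ∈ Module.annihilator R I := by
      rw [Module.mem_annihilator]
      intro m
      exact Subtype.ext (hz m (Ideal.mem_sup_left m.2))
    exact IsReduced.eq_zero z ⟨2, by rw [pow_two, hz z (Ideal.mem_sup_right h1)]⟩)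
  obtain ⟨a, ha, b, hb, rfl⟩ := Submodule.mem_sup.1 hy
  refine ⟨a, b, ha, fun r hr => ?_, hn⟩
  rw [Module.mem_annihilator] at hb
  exact congrArg Subtype.val (hb ⟨r, hr⟩)
end Basics

section Engine
variable {R : Type} [CommRing R] [IsLocalRing R] [IsNoetherianRing R] [IsReduced R]

lemma killed_engine {D E : Type} [AddCommGroup D] [Module R D] [AddCommGroup E] [Module R E]
    (f : D →ₗ[R] E) (hf : Function.Injective f)
    (hess : ∀ e : E, e ≠ 0 → ∃ r : R, r • e ≠ 0 ∧ r • e ∈ LinearMap.range f)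
    (c : Ideal R) (h : ∀ n : ℕ, EV R (R ⧸ (maximalIdeal R ^ n * c)) D 1)
    (n : ℕ) (u : E ⧸ LinearMap.range f) (hu : ∀ r ∈ maximalIdeal R ^ n * c, r • u = 0) :
    ∀ r ∈ c, r • u = 0 := by
  induction n with
  | zero => simpa using hu
  | succ n ih =>
    refine ih ?_
    let φ : (R ⧸ (maximalIdeal R ^ (n+1) * c)) →ₗ[R] E ⧸ LinearMap.range f :=
      Submodule.liftQ _ (LinearMap.toSpanSingleton R _ u) (by
        intro r hr; simpa using hu r hr)
    obtain ⟨ψ, hψ⟩ := EV_hom f (LinearMap.range f).mkQ hf (Submodule.mkQ_surjective _)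
      (by intro x; simp) (h (n+1)) φ
    set e : E := ψ (Submodule.Quotient.mk 1) with he
    have heu : Submodule.Quotient.mk e = u := by
      have := LinearMap.congr_fun hψ (Submodule.Quotient.mk 1)
      refine Eq.trans this ?_
      change (LinearMap.toSpanSingleton R _ u) 1 = u
      simp
    have hke : ∀ r ∈ maximalIdeal R ^ (n+1) * c, r • e = 0 := by
      intro r hr
      rw [he, ← map_smul]
      have : r • (Submodule.Quotient.mk 1 : R ⧸ (maximalIdeal R ^ (n+1) * c)) = 0 := by
        rw [← Submodule.Quotient.mk_smul, Submodule.Quotient.mk_eq_zero]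
        simpa using hr
      rw [this, map_zero]
    intro r hr
    rw [← heu, ← Submodule.Quotient.mk_smul]
    rw [Submodule.Quotient.mk_eq_zero]
    by_cases h0 : r • e = 0
    · rw [h0]; exact zero_mem _
    obtain ⟨s, hs0, hs⟩ := hess _ h0
    have hsu : IsUnit s := by
      by_contra hns
      have hsm : s ∈ maximalIdeal R := hns
      apply hs0
      rw [← mul_smul]
      apply hke
      rw [pow_succ', mul_assoc]
      exact Ideal.mul_mem_mul hsm hr
    obtain ⟨s, rfl⟩ := hsu
    have := (LinearMap.range f).smul_mem (↑s⁻¹ : R) hs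
    rwa [← mul_smul, Units.inv_mul, one_smul] at this

lemma engine0 (hpow : ∀ z ∈ nonZeroDivisors R, ∃ N, maximalIdeal R ^ N ≤ Ideal.span {z})
    (c : Ideal R) (x : R) (hxc : x ∈ c) (hx : x ∈ nonZeroDivisors R)
    {D : Type} [AddCommGroup D] [Module R D]
    (h : ∀ n : ℕ, EV R (R ⧸ (maximalIdeal R ^ n * c)) D 1) :
    HasInjectiveDimensionLT (ModuleCat.of R D) 2 := by
  obtain ⟨E, _, _, f, hf, hE, hess⟩ := exists_hull R D
  have hdiv : ∀ z ∈ nonZeroDivisors R, ∀ e : E, ∃ e', z • e' = e := by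
    intro z hz e
    obtain ⟨g, hg⟩ := hE.out (LinearMap.mulLeft R z) (by
      intro a b hab
      exact (mul_cancel_left_mem_nonZeroDivisors hz).1 hab) (LinearMap.toSpanSingleton R E e)
    refine ⟨g 1, ?_⟩
    have := hg 1
    rw [LinearMap.mulLeft_apply, mul_one] at this
    rw [← map_smul, smul_eq_mul, mul_one, this]; simp
  have hdivC : ∀ z ∈ nonZeroDivisors R, ∀ u : E ⧸ LinearMap.range f, ∃ u', z • u' = u := by
    intro z hz u
    obtain ⟨e, rfl⟩ := Submodule.Quotient.mk_surjective _ u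
    obtain ⟨e', rfl⟩ := hdiv z hz e
    exact ⟨Submodule.Quotient.mk e', rfl⟩
  have hinjC : ∀ z ∈ nonZeroDivisors R, z ∈ c → ∀ u : E ⧸ LinearMap.range f, z • u = 0 → u = 0 := by
    intro z hz hzc u hu
    obtain ⟨v, rfl⟩ := hdivC z hz u
    obtain ⟨N, hN⟩ := hpow (z * z) (mul_mem hz hz)
    refine killed_engine f hf hess c h N v ?_ z hzc
    intro r hr
    have hle : maximalIdeal R ^ N * c ≤ Ideal.span {z * z} := le_trans Ideal.mul_le_left hN
    have hr' : r ∈ Ideal.span {z * z} := hle hr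
    obtain ⟨t, rfl⟩ := Ideal.mem_span_singleton.1 hr'
    rw [mul_comm, mul_smul, mul_smul, hu, smul_zero]
  have hC : Module.Injective R (E ⧸ LinearMap.range f) := by
    apply Module.Baer.injective
    intro I g
    obtain ⟨a, b, ha, hb, hab⟩ := exists_nzd_split I
    set z := x * (a + b) with hz
    have hzn : z ∈ nonZeroDivisors R := mul_mem hx hab
    have hzc : z ∈ c := Ideal.mul_mem_right _ _ hxc
    let Z : (E ⧸ LinearMap.range f) →ₗ[R] (E ⧸ LinearMap.range f) := LinearMap.lsmul R (E ⧸ LinearMap.range f) z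
    have hZ : Function.Bijective Z := by
      constructor
      · rw [← LinearMap.ker_eq_bot, LinearMap.ker_eq_bot']
        exact hinjC z hzn hzc
      · exact hdivC z hzn
    let Ze := LinearEquiv.ofBijective Z hZ
    refine ⟨Ze.symm.toLinearMap ∘ₗ LinearMap.toSpanSingleton R _ (g ⟨x * a, I.mul_mem_left _ ha⟩), ?_⟩
    intro r hr
    change Ze.symm (r • g _) = _
    rw [LinearEquiv.symm_apply_eq]
    change _ = z • g _
    rw [← map_smul, ← map_smul]
    congr 1
    ext
    change r * (x * a) = z * r
    have := hb r hr
    rw [hz]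
    linear_combination (-x) * this
  have := Module.injective_object_of_injective_module R (E ⧸ LinearMap.range f)
  exact injdim_step f (LinearMap.range f).mkQ hf (Submodule.mkQ_surjective _)
      (by intro x; simp) hE 0 (inferInstance)

lemma engine (hpow : ∀ z ∈ nonZeroDivisors R, ∃ N, maximalIdeal R ^ N ≤ Ideal.span {z})
    (c : Ideal R) (x : R) (hxc : x ∈ c) (hx : x ∈ nonZeroDivisors R) (i : ℕ) :
    ∀ (D : Type) [AddCommGroup D] [Module R D]
    (_ : ∀ n : ℕ, EV R (R ⧸ (maximalIdeal R ^ n * c)) D (i+1)),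
    HasInjectiveDimensionLT (ModuleCat.of R D) (i+2) := by
  induction i with
  | zero => intro D _ _ h; exact engine0 hpow c x hxc hx h
  | succ i ih =>
    intro D _ _ h
    obtain ⟨E, _, _, f, hf, hE, -⟩ := exists_hull R D
    have he : Function.Exact f (LinearMap.range f).mkQ := by intro x; simp
    have := ih (E ⧸ LinearMap.range f) (fun n =>
      EV_cov f (LinearMap.range f).mkQ hf (Submodule.mkQ_surjective _) he hE i (h n))
    exact injdim_step f (LinearMap.range f).mkQ hf (Submodule.mkQ_surjective _) he hE (i+1) this

lemma engine_gor (hpow : ∀ z ∈ nonZeroDivisors R, ∃ N, maximalIdeal R ^ N ≤ Ideal.span {z})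
    (c : Ideal R) (x : R) (hxc : x ∈ c) (hx : x ∈ nonZeroDivisors R) (i : ℕ)
    (h : ∀ n : ℕ, EV R ↥(maximalIdeal R ^ n * c) R (i+1)) : IsGorensteinLocal R := by
  refine ⟨inferInstance, i + 3, fun N j hj => ?_⟩
  have h2 : ∀ n : ℕ, EV R (R ⧸ (maximalIdeal R ^ n * c)) R (i+1+1) := fun n =>
    EV_third (M₁ := ↥(maximalIdeal R ^ n * c)) (Submodule.subtype _) (Submodule.mkQ _)
      Subtype.val_injective (Submodule.mkQ_surjective _) (LinearMap.exact_subtype_mkQ _)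
      (i+1) (h n) (EV_self _)
  have := engine hpow c x hxc hx (i+1) R h2
  obtain ⟨j, rfl⟩ : ∃ k, j = k + 1 := ⟨j - 1, by omega⟩
  rw [ext_bridge]
  exact HasInjectiveDimensionLT.subsingleton _ (i+1+2) _ (by omega) _
end Engine
section GorVanish
variable {R : Type} [CommRing R] [IsLocalRing R] [IsNoetherianRing R]

lemma EV_quot_nzd (x : R) (hx : x ∈ nonZeroDivisors R) (j : ℕ) :
    EV R (R ⧸ Ideal.span {x}) R (j+2) := by
  refine EV_third (M₁ := R) (M₂ := R) (LinearMap.mulLeft R x) (Submodule.mkQ (Ideal.span {x}))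
    ?_ (Submodule.mkQ_surjective _) ?_ (j+1) (EV_self _) (EV_self _)
  · intro a b hab
    exact (mul_cancel_left_mem_nonZeroDivisors hx).1 hab
  · intro y
    rw [Submodule.mkQ_apply, Submodule.Quotient.mk_eq_zero, Ideal.mem_span_singleton]
    constructor
    · rintro ⟨t, rfl⟩; exact ⟨t, rfl⟩
    · rintro ⟨t, rfl⟩; exact ⟨t, rfl⟩

lemma exists_socle (x : R) (hxm : x ∈ maximalIdeal R)
    (hN : ∃ N, maximalIdeal R ^ N ≤ Ideal.span {x}) :
    ∃ w : R, w ∉ Ideal.span {x} ∧ ∀ r ∈ maximalIdeal R, r * w ∈ Ideal.span {x} := by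
  classical
  have h0 : Nat.find hN ≠ 0 := by
    intro h0
    have := Nat.find_spec hN
    rw [h0, pow_zero, Ideal.one_eq_top, top_le_iff, Ideal.span_singleton_eq_top] at this
    exact hxm this
  obtain ⟨k, hk⟩ := Nat.exists_eq_succ_of_ne_zero h0
  have h1 := Nat.find_min hN (m := k) (by omega)
  obtain ⟨w, hw, hw'⟩ := Set.not_subset.1 h1
  refine ⟨w, hw', fun r hr => ?_⟩
  apply Nat.find_spec hN
  rw [hk, Nat.succ_eq_add_one, pow_succ']
  exact Ideal.mul_mem_mul hr hw

lemma gor_step (x : R) (hxm : x ∈ maximalIdeal R) (hx : x ∈ nonZeroDivisors R)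
    (hN : ∃ N, maximalIdeal R ^ N ≤ Ideal.span {x}) (j : ℕ)
    (h : ∀ (L : Type) [AddCommGroup L] [Module R L] [Module.Finite R L],
      (∃ n, ∀ r ∈ maximalIdeal R ^ n, ∀ l : L, r • l = 0) → EV R L R (j+2+1))
    (L : Type) [AddCommGroup L] [Module R L] [hfin : Module.Finite R L]
    (hL : ∃ n, ∀ r ∈ maximalIdeal R ^ n, ∀ l : L, r • l = 0) : EV R L R (j+2) := by
  have hk : EV R (R ⧸ maximalIdeal R) R (j+2) := by
    obtain ⟨w, hw, hw'⟩ := exists_socle x hxm hN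
    let φ : (R ⧸ maximalIdeal R) →ₗ[R] (R ⧸ Ideal.span {x}) :=
      Submodule.liftQ _ (LinearMap.toSpanSingleton R _ (Submodule.Quotient.mk w)) (by
        intro r hr
        rw [LinearMap.mem_ker, LinearMap.toSpanSingleton_apply, ← Submodule.Quotient.mk_smul,
          Submodule.Quotient.mk_eq_zero]
        exact hw' r hr)
    have hφ : Function.Injective φ := by
      rw [← LinearMap.ker_eq_bot, LinearMap.ker_eq_bot']
      intro a ha
      obtain ⟨r, rfl⟩ := Submodule.Quotient.mk_surjective _ a
      have ha' : r • (Submodule.Quotient.mk w : R ⧸ Ideal.span {x}) = 0 := ha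
      rw [← Submodule.Quotient.mk_smul, Submodule.Quotient.mk_eq_zero] at ha'
      rw [Submodule.Quotient.mk_eq_zero]
      by_contra hr
      have hu : IsUnit r := by simpa using hr
      exact hw ((Ideal.unit_mul_mem_iff_mem _ hu).1 ha')
    refine EV_first φ (LinearMap.range φ).mkQ hφ (Submodule.mkQ_surjective _)
      (by intro x; simp) (j+2) (EV_quot_nzd x hx j) (h _ ?_)
    obtain ⟨N, hN⟩ := hN
    refine ⟨N, fun r hr l => ?_⟩
    obtain ⟨l, rfl⟩ := Submodule.Quotient.mk_surjective _ l
    obtain ⟨l, rfl⟩ := Submodule.Quotient.mk_surjective _ l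
    have : r • (Submodule.Quotient.mk l : R ⧸ Ideal.span {x}) = 0 := by
      rw [← Submodule.Quotient.mk_smul, Submodule.Quotient.mk_eq_zero]
      exact Ideal.mul_mem_right _ _ (hN hr)
    rw [← Submodule.Quotient.mk_smul, this, Submodule.Quotient.mk_zero]
  revert hL
  refine IsNoetherianRing.induction_on_isQuotientEquivQuotientPrime R hfin
    (motive := fun N _ _ _ => (∃ n, ∀ r ∈ maximalIdeal R ^ n, ∀ l : N, r • l = 0) →
      EV R N R (j+2)) ?_ ?_ ?_
  · intro N _ _ _ _ _
    exact EV_congr (M₁ := PUnit) (LinearEquiv.ofSubsingleton _ _) _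
      (EV_congr (M₁ := R ⧸ (⊤ : Ideal R)) (LinearEquiv.ofSubsingleton _ _) _ (by
        have := EV_quot_nzd (1 : R) (one_mem _) j
        rwa [Ideal.span_singleton_one] at this))
  · rintro N _ _ _ p e ⟨n, hn⟩
    have hp : p.1 = maximalIdeal R := by
      have h1 : maximalIdeal R ^ n ≤ p.1 := by
        intro r hr
        have := hn r hr (e.symm (Submodule.Quotient.mk 1))
        rw [← map_smul, LinearEquiv.map_eq_zero_iff, ← Submodule.Quotient.mk_smul,
          Submodule.Quotient.mk_eq_zero] at this
        simpa using this
      exact le_antisymm (IsLocalRing.le_maximalIdeal p.2.ne_top) (p.2.le_of_pow_le h1)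
    rw [hp] at e
    exact EV_congr e.symm _ hk
  · intro N₁ _ _ _ N₂ _ _ _ N₃ _ _ _ f g hf hg hfg h1 h3 ⟨n, hn⟩
    refine EV_middle f g hf hg hfg _ (h1 ⟨n, fun r hr l => hf ?_⟩) (h3 ⟨n, fun r hr l => ?_⟩)
    · rw [map_smul, hn r hr, map_zero]
    · obtain ⟨l, rfl⟩ := hg l
      rw [← map_smul, hn r hr, map_zero]

lemma gor_vanish (hG : IsGorensteinLocal R) (hdim : ringKrullDim R = 1) (x : R)
    (hxm : x ∈ maximalIdeal R) (hx : x ∈ nonZeroDivisors R)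
    (I : Ideal R) (y : R) (hyI : y ∈ I) (hy : y ∈ nonZeroDivisors R) (i : ℕ) (hi : 0 < i) :
    EV R I R i := by
  obtain ⟨-, n, hn⟩ := hG
  have key : ∀ k j : ℕ, n < j + 2 + k → ∀ (L : Type) [AddCommGroup L] [Module R L] [Module.Finite R L],
      (∃ n, ∀ r ∈ maximalIdeal R ^ n, ∀ l : L, r • l = 0) → EV R L R (j+2) := by
    intro k
    induction k with
    | zero =>
      intro j hj L _ _ _ _
      exact (ext_bridge _ _ (j+1)).1 (hn (ModuleCat.of R L) (j+2) hj)
    | succ k ih =>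
      intro j hj L _ _ _ hL
      refine gor_step x hxm hx (pow_le_of_nzd hdim x hx) j ?_ L hL
      intro L' _ _ _ hL'
      exact ih (j+1) (by omega) L' hL'
  obtain ⟨i, rfl⟩ : ∃ k, i = k + 1 := ⟨i - 1, by omega⟩
  refine EV_first (M₁ := I) (Submodule.subtype I) (Submodule.mkQ I)
      Subtype.val_injective (Submodule.mkQ_surjective _) (LinearMap.exact_subtype_mkQ _)
      (i+1) (EV_self _) (key n i (by omega) _ ?_)
  obtain ⟨N, hN⟩ := pow_le_of_nzd hdim y hy
  refine ⟨N, fun r hr l => ?_⟩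
  obtain ⟨l, rfl⟩ := Submodule.Quotient.mk_surjective _ l
  rw [← Submodule.Quotient.mk_smul, Submodule.Quotient.mk_eq_zero]
  have h1 : r ∈ Ideal.span {y} := hN hr
  have h2 : Ideal.span {y} ≤ I := (Ideal.span_singleton_le_iff_mem _).2 hyI
  exact Ideal.mul_mem_right _ _ (h2 h1)
end GorVanish
section Artin
set_option linter.unusedSectionVars false
variable {R : Type} [CommRing R] [IsLocalRing R] [IsNoetherianRing R]

lemma finLen (L : Type) [AddCommGroup L] [Module R L] [hfin : Module.Finite R L]
    (hL : ∃ n, ∀ r ∈ maximalIdeal R ^ n, ∀ l : L, r • l = 0) : Module.length R L ≠ ⊤ := by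
  revert hL
  refine IsNoetherianRing.induction_on_isQuotientEquivQuotientPrime R hfin
    (motive := fun N _ _ _ => (∃ n, ∀ r ∈ maximalIdeal R ^ n, ∀ l : N, r • l = 0) →
      Module.length R N ≠ ⊤) ?_ ?_ ?_
  · intro N _ _ _ _ _
    rw [Module.length_eq_zero]
    exact ENat.zero_ne_top
  · rintro N _ _ _ p e ⟨n, hn⟩
    have hp : p.1 = maximalIdeal R := by
      have h1 : maximalIdeal R ^ n ≤ p.1 := by
        intro r hr
        have := hn r hr (e.symm (Submodule.Quotient.mk 1))
        rw [← map_smul, LinearEquiv.map_eq_zero_iff, ← Submodule.Quotient.mk_smul,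
          Submodule.Quotient.mk_eq_zero] at this
        simpa using this
      exact le_antisymm (IsLocalRing.le_maximalIdeal p.2.ne_top) (p.2.le_of_pow_le h1)
    rw [hp] at e
    have hs : IsSimpleModule R (R ⧸ maximalIdeal R) :=
      isSimpleModule_iff_isCoatom.2 (Ideal.isMaximal_def.1 inferInstance)
    rw [e.length_eq, Module.length_eq_one]
    exact ENat.one_ne_top
  · intro N₁ _ _ _ N₂ _ _ _ N₃ _ _ _ f g hf hg hfg h1 h3 ⟨n, hn⟩
    have h1' := h1 ⟨n, fun r hr l => hf (by rw [map_smul, hn r hr, map_zero])⟩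
    have h3' := h3 ⟨n, fun r hr l => by
      obtain ⟨l, rfl⟩ := hg l
      rw [← map_smul, hn r hr, map_zero]⟩
    rw [Module.length_eq_add_of_exact f g hf hg hfg]
    exact WithTop.add_ne_top.2 ⟨h1', h3'⟩

lemma artin_ann {A : Type} [CommRing A] (x : A) [IsArtinianRing (A ⧸ Ideal.span {x})] (J : Ideal A)
    (hxJ : x ∈ J) (hJ : (1 : A) ∉ J) :
    ∃ b : A, b ∉ Ideal.span {x} ∧ ∀ j ∈ J, b * j ∈ Ideal.span {x} := by
  have hle : Ideal.span {x} ≤ J := (Ideal.span_singleton_le_iff_mem _).2 hxJ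
  have hJ' : ∀ a : A, Ideal.Quotient.mk (Ideal.span {x}) a ∈ J.map (Ideal.Quotient.mk (Ideal.span {x})) →
      a ∈ J := by
    intro a ha
    have h2 := Ideal.comap_map_of_surjective _ (Ideal.Quotient.mk_surjective (I := Ideal.span {x})) J
    have h3 : a ∈ (J.map (Ideal.Quotient.mk (Ideal.span {x}))).comap (Ideal.Quotient.mk (Ideal.span {x})) := ha
    rw [h2, ← RingHom.ker_eq_comap_bot, Ideal.mk_ker, sup_eq_left.2 hle] at h3
    exact h3
  have := Ideal.bot_lt_annihilator_of_disjoint_nonZeroDivisors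
    (I := J.map (Ideal.Quotient.mk (Ideal.span {x}))) (by
      rw [Set.disjoint_left]
      intro a ha hna
      have hu := IsArtinianRing.isUnit_of_mem_nonZeroDivisors hna
      have htop := Ideal.eq_top_of_isUnit_mem _ ha hu
      exact hJ (hJ' 1 (by rw [htop]; trivial)))
  obtain ⟨b, hb, hb0⟩ := SetLike.exists_of_lt this
  obtain ⟨b, rfl⟩ := Ideal.Quotient.mk_surjective b
  refine ⟨b, fun h => hb0 ?_, fun j hj => ?_⟩
  · rw [Ideal.Quotient.eq_zero_iff_mem.2 h]; exact zero_mem _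
  · rw [Module.mem_annihilator] at hb
    have := congrArg Subtype.val (hb ⟨_, Ideal.mem_map_of_mem _ hj⟩)
    rw [← Ideal.Quotient.eq_zero_iff_mem, map_mul]
    exact this

lemma integral_of_stable {K : Type} [CommRing K] [Algebra R K] (B : Submodule R K) (hB : B.FG)
    (h1 : (1 : K) ∈ B) (s : K) (hs : ∀ b ∈ B, s * b ∈ B) : IsIntegral R s := by
  let T : Subalgebra R K :=
    { carrier := {t | ∀ b ∈ B, t * b ∈ B}
      mul_mem' := fun {a b} ha hb n hn => by rw [mul_assoc]; exact ha _ (hb _ hn)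
      one_mem' := fun n hn => by rwa [one_mul]
      add_mem' := fun {a b} ha hb n hn => by rw [add_mul]; exact B.add_mem (ha _ hn) (hb _ hn)
      zero_mem' := fun n _ => by rw [zero_mul]; exact B.zero_mem
      algebraMap_mem' := fun r n hn => by rw [← Algebra.smul_def]; exact B.smul_mem r hn }
  have hTB : Subalgebra.toSubmodule T ≤ B := by
    intro t ht
    have := ht 1 h1
    rwa [mul_one] at this
  refine IsIntegral.of_mem_of_fg T ?_ s hs
  have := isNoetherian_of_fg_of_noetherian B hB
  have := isNoetherian_of_le hTB
  exact (Submodule.fg_top _).1 (IsNoetherian.noetherian _)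
end Artin

section Invert
set_option linter.unusedSectionVars false
variable {R : Type} [CommRing R] [IsLocalRing R] [IsNoetherianRing R]
variable {K : Type} [CommRing K] [Algebra R K] [IsFractionRing R K]

/-- the integral closure as a submodule -/
abbrev IC (R K : Type) [CommRing R] [CommRing K] [Algebra R K] : Submodule R K :=
  Subalgebra.toSubmodule (integralClosure R K)

lemma ic_artin (hfg : (IC R K).FG)
    (x : R) (hN : ∃ N, maximalIdeal R ^ N ≤ Ideal.span {x}) :
    IsArtinianRing (integralClosure R K ⧸ Ideal.span {algebraMap R (integralClosure R K) x}) := by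
  have : Module.Finite R (integralClosure R K) := Module.Finite.iff_fg.2 hfg
  obtain ⟨N, hN⟩ := hN
  have h := finLen (R := R)
    (integralClosure R K ⧸ Ideal.span {algebraMap R (integralClosure R K) x}) ⟨N, fun r hr l => by
      obtain ⟨l, rfl⟩ := Ideal.Quotient.mk_surjective l
      obtain ⟨t, rfl⟩ := Ideal.mem_span_singleton.1 (hN hr)
      change Ideal.Quotient.mk _ ((x * t) • l) = 0
      rw [Ideal.Quotient.eq_zero_iff_mem, Algebra.smul_def, map_mul, mul_assoc]
      exact Ideal.mul_mem_right _ _ (Ideal.mem_span_singleton_self _)⟩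
  rw [Module.length_ne_top_iff, isFiniteLength_iff_isNoetherian_isArtinian] at h
  exact isArtinian_of_tower R h.2

lemma invert (hfg : (IC R K).FG) (I : Submodule R K) (hI : I ≤ IC R K) (hAI : IC R K * I ≤ I)
    (x : R) (hx : x ∈ nonZeroDivisors R) (hxI : algebraMap R K x ∈ I)
    (hN : ∃ N, maximalIdeal R ^ N ≤ Ideal.span {x}) :
    (1 : K) ∈ I * (IC R K / I) := by
  by_contra hcon
  have hxu : IsUnit (algebraMap R K x) := IsLocalization.map_units K ⟨x, hx⟩
  obtain ⟨u, hu⟩ := hxu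
  have h1B : (1 : K) ∈ IC R K / I := Submodule.one_mem_div.2 hI
  set B := IC R K / I with hB
  set J := I * B with hJ
  have hAJ : ∀ a ∈ IC R K, ∀ j ∈ J, a * j ∈ J := by
    intro a ha j hj
    have h2 : IC R K * J ≤ J := by
      rw [hJ, ← mul_assoc]; exact mul_le_mul_left hAI _
    exact h2 (Submodule.mul_mem_mul ha hj)
  have hxJ : algebraMap R K x ∈ J := by
    have := Submodule.mul_mem_mul hxI h1B
    rwa [mul_one] at this
  let JA : Ideal (integralClosure R K) :=
    { carrier := {a | (a : K) ∈ J}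
      add_mem' := fun {a b} ha hb => J.add_mem ha hb
      zero_mem' := J.zero_mem
      smul_mem' := fun a b hb => hAJ a a.2 b hb }
  have := ic_artin hfg x hN
  obtain ⟨b, hb, hbJ⟩ := artin_ann (algebraMap R (integralClosure R K) x) JA hxJ hcon
  have hJA : J ≤ IC R K := by
    rw [hJ, Submodule.mul_le]
    intro i hi t ht
    rw [mul_comm]
    exact Submodule.mem_div_iff_forall_mul_mem.1 ht i hi
  set s : K := ↑u⁻¹ * b with hs
  have hxs : algebraMap R K x * s = b := by
    rw [hs, ← hu, ← mul_assoc, Units.mul_inv, one_mul]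
  have hsJ : ∀ j ∈ J, s * j ∈ IC R K := by
    intro j hj
    obtain ⟨t, ht⟩ := Ideal.mem_span_singleton.1 (hbJ ⟨j, hJA hj⟩ hj)
    have ht' : (b : K) * j = algebraMap R K x * t := congrArg Subtype.val ht
    have : s * j = t := by
      rw [hs, mul_assoc, ht', ← hu, ← mul_assoc, Units.inv_mul, one_mul]
    rw [this]; exact t.2
  have hsB : ∀ t ∈ B, s * t ∈ B := by
    intro t ht
    rw [hB, Submodule.mem_div_iff_forall_mul_mem]
    intro i hi
    rw [mul_assoc, mul_comm t i]
    exact hsJ _ (Submodule.mul_mem_mul hi ht)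
  have hBfg : B.FG := by
    have h3 : B ≤ (IC R K).map (LinearMap.mulLeft R (↑u⁻¹ : K)) := by
      intro t ht
      refine ⟨algebraMap R K x * t, ?_, ?_⟩
      · rw [mul_comm]; exact Submodule.mem_div_iff_forall_mul_mem.1 ht _ hxI
      · rw [LinearMap.mulLeft_apply, ← hu, ← mul_assoc, Units.inv_mul, one_mul]
    have := isNoetherian_of_fg_of_noetherian _ (hfg.map (LinearMap.mulLeft R (↑u⁻¹ : K)))
    have := isNoetherian_of_le h3
    exact (Submodule.fg_top _).1 (IsNoetherian.noetherian _)
  have hint : IsIntegral R s := integral_of_stable B hBfg h1B s hsB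
  apply hb
  rw [Ideal.mem_span_singleton]
  exact ⟨⟨s, hint⟩, Subtype.ext hxs.symm⟩

/-- multiplication by `t` as a map between submodules -/
def mulMap (P Q : Submodule R K) (t : K) (ht : ∀ p ∈ P, t * p ∈ Q) : P →ₗ[R] Q :=
  (LinearMap.mulLeft R t).restrict ht

lemma transfer (X J : Submodule R K) (hAX : IC R K * X ≤ X) (hAJ : IC R K * J ≤ J)
    (hX : (1 : K) ∈ X * (IC R K / X)) (hJ : (1 : K) ∈ J * (IC R K / J))
    {N : Type} [AddCommGroup N] [Module R N] (n : ℕ) (h : EV R X N n) : EV R J N n := by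
  have key : ∀ t ∈ (X / J) * (J / X), ∃ ht : ∀ p ∈ J, t * p ∈ J, mulMap J J t ht ∈
      AddSubmonoid.closure {t : J →ₗ[R] J | ∃ (a : J →ₗ[R] X) (b : X →ₗ[R] J), t = b ∘ₗ a} := by
    intro t ht
    induction ht using Submodule.mul_induction_on' with
    | mem_mul_mem p hp q hq =>
      rw [Submodule.mem_div_iff_forall_mul_mem] at hp hq
      refine ⟨fun r hr => by rw [mul_comm p q, mul_assoc]; exact hq _ (hp _ hr), ?_⟩
      refine AddSubmonoid.subset_closure ⟨mulMap J X p hp, mulMap X J q hq, ?_⟩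
      ext r
      change p * q * r = q * (p * r)
      ring
    | add a ha b hb iha ihb =>
      obtain ⟨ha, ha'⟩ := iha
      obtain ⟨hb, hb'⟩ := ihb
      refine ⟨fun r hr => by rw [add_mul]; exact J.add_mem (ha r hr) (hb r hr), ?_⟩
      convert add_mem ha' hb' using 1
      ext r
      change (a + b) * r = a * r + b * r
      ring
  have hone : (1 : K) ∈ (X / J) * (J / X) := by
    have h1 := Submodule.mul_mem_mul hX hJ
    rw [one_mul] at h1
    have h2 : X * (IC R K / X) * (J * (IC R K / J)) = (X * (IC R K / J)) * (J * (IC R K / X)) := by ring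
    rw [h2] at h1
    have h3 : ∀ U V : Submodule R K, IC R K * U ≤ U → U * (IC R K / V) ≤ U / V := by
      intro U V hU
      rw [Submodule.mul_le]
      intro m hm n hn
      rw [Submodule.mem_div_iff_forall_mul_mem] at hn ⊢
      intro y hy
      rw [mul_assoc, mul_comm]
      exact hU (Submodule.mul_mem_mul (hn y hy) hm)
    exact mul_le_mul' (h3 X J hAX) (h3 J X hAJ) h1
  obtain ⟨h1, h2⟩ := key 1 hone
  refine EV_factor h _ rfl ?_
  convert h2 using 1
  ext r
  exact (one_mul _).symm
end Invert
section Finiteness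
set_option linter.unusedSectionVars false
variable {R : Type} [CommRing R] [IsLocalRing R] [IsNoetherianRing R]

lemma length_mod (x : R) {M : Type} [AddCommGroup M] [Module R M] (f : R →ₗ[R] M)
    (hf : Function.Injective f) (φ : M →ₗ[R] M) (hφx : ∀ m, φ m = x • m)
    (hφ : Function.Injective φ)
    (hC : Module.length R (M ⧸ LinearMap.range f) ≠ ⊤) :
    Module.length R (M ⧸ LinearMap.range φ) = Module.length R (R ⧸ Ideal.span {x}) := by
  set P : Submodule R M := (LinearMap.range f).map φ with hP
  have hPf : P ≤ LinearMap.range f := by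
    rintro _ ⟨_, ⟨r, rfl⟩, rfl⟩
    exact ⟨x • r, by rw [map_smul, hφx]⟩
  have hPφ : P ≤ LinearMap.range φ := by
    rintro _ ⟨m, _, rfl⟩
    exact ⟨m, rfl⟩
  have ha : Ideal.span {x} ≤ P.comap f := by
    rw [Ideal.span_singleton_le_iff_mem]
    exact ⟨f 1, ⟨1, rfl⟩, by rw [hφx, ← map_smul]; simp⟩
  have hb : LinearMap.range f ≤ P.comap φ := fun m hm => ⟨m, hm, rfl⟩
  have e1 := Module.length_eq_add_of_exact (Submodule.mapQ (Ideal.span {x}) P f ha)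
    (Submodule.mapQ P (LinearMap.range f) LinearMap.id hPf) (by
      rw [← LinearMap.ker_eq_bot, LinearMap.ker_eq_bot']
      intro a h
      obtain ⟨r, rfl⟩ := Submodule.Quotient.mk_surjective _ a
      rw [Submodule.mapQ_apply, Submodule.Quotient.mk_eq_zero] at h
      obtain ⟨_, ⟨t, rfl⟩, h⟩ := h
      rw [hφx, ← map_smul] at h
      rw [Submodule.Quotient.mk_eq_zero, Ideal.mem_span_singleton]
      exact ⟨t, (hf h).symm⟩) (by
      intro a
      obtain ⟨m, rfl⟩ := Submodule.Quotient.mk_surjective _ a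
      exact ⟨Submodule.Quotient.mk m, rfl⟩) (by
      intro a
      obtain ⟨m, rfl⟩ := Submodule.Quotient.mk_surjective _ a
      rw [Submodule.mapQ_apply, Submodule.Quotient.mk_eq_zero]
      constructor
      · rintro ⟨r, hr⟩
        exact ⟨Submodule.Quotient.mk r, by rw [Submodule.mapQ_apply, hr]; rfl⟩
      · rintro ⟨r, hr⟩
        obtain ⟨r, rfl⟩ := Submodule.Quotient.mk_surjective _ r
        rw [Submodule.mapQ_apply, Submodule.Quotient.eq] at hr
        have := (LinearMap.range f).sub_mem ⟨r, rfl⟩ (hPf hr)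
        simpa using this)
  have e2 := Module.length_eq_add_of_exact (Submodule.mapQ (LinearMap.range f) P φ hb)
    (Submodule.mapQ P (LinearMap.range φ) LinearMap.id hPφ) (by
      rw [← LinearMap.ker_eq_bot, LinearMap.ker_eq_bot']
      intro a h
      obtain ⟨r, rfl⟩ := Submodule.Quotient.mk_surjective _ a
      rw [Submodule.mapQ_apply, Submodule.Quotient.mk_eq_zero] at h
      obtain ⟨y, hy, h⟩ := h
      rw [Submodule.Quotient.mk_eq_zero, ← hφ h]
      exact hy) (by
      intro a
      obtain ⟨m, rfl⟩ := Submodule.Quotient.mk_surjective _ a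
      exact ⟨Submodule.Quotient.mk m, rfl⟩) (by
      intro a
      obtain ⟨m, rfl⟩ := Submodule.Quotient.mk_surjective _ a
      rw [Submodule.mapQ_apply, Submodule.Quotient.mk_eq_zero]
      constructor
      · rintro ⟨r, hr⟩
        exact ⟨Submodule.Quotient.mk r, by rw [Submodule.mapQ_apply, hr]; rfl⟩
      · rintro ⟨r, hr⟩
        obtain ⟨r, rfl⟩ := Submodule.Quotient.mk_surjective _ r
        rw [Submodule.mapQ_apply, Submodule.Quotient.eq] at hr
        have := (LinearMap.range φ).sub_mem ⟨r, rfl⟩ (hPφ hr)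
        simpa using this)
  rw [e1, add_comm] at e2
  exact (WithTop.add_left_cancel hC e2).symm

lemma chain_stop {M : Type} [AddCommGroup M] [Module R M] (e : ℕ) (he : Module.length R M ≤ e)
    (N : ℕ → Submodule R M) (hN : ∀ i, N i ≤ N (i+1)) : ∃ i ≤ e, N (i+1) ≤ N i := by
  by_contra hc
  push Not at hc
  have key : ∀ i ≤ e + 1, (i : ℕ∞) ≤ Order.height (N i) := by
    intro i
    induction i with
    | zero => intro _; simp
    | succ i ih =>
      intro hi
      have h1 : N i < N (i+1) := lt_of_le_not_ge (hN i) (hc i (by omega))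
      have h2 := Order.height_add_one_le h1
      push_cast
      exact le_trans (by gcongr; exact ih (by omega)) h2
  have h3 := key (e+1) le_rfl
  have h4 : Order.height (N (e+1)) ≤ Order.height (⊤ : Submodule R M) := Order.height_mono le_top
  rw [← Module.length_eq_height] at h4
  have h5 := (h3.trans h4).trans he
  rw [Nat.cast_le] at h5
  omega

lemma pow_mem_span {S : Type} [CommRing S] [Algebra R S] [Module.Finite R S]
    (hinj : Function.Injective (algebraMap R S)) (x : R) (hxm : x ∈ maximalIdeal R)
    (hx : ∀ s : S, x • s = 0 → s = 0)
    (hC : Module.length R (S ⧸ LinearMap.range (Algebra.linearMap R S)) ≠ ⊤)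
    (σ : S) (hgen : ∀ N : Submodule R S, 1 ∈ N → (∀ n ∈ N, σ * n ∈ N) → N = ⊤)
    (e : ℕ) (he : Module.length R (R ⧸ Ideal.span {x}) ≤ e) :
    ∃ i ≤ e, σ ^ i ∈ Submodule.span R ((fun j : ℕ => σ ^ j) '' Set.Iio i) := by
  let φ : S →ₗ[R] S := LinearMap.lsmul R S x
  have hφ : Function.Injective φ := by
    rw [← LinearMap.ker_eq_bot, LinearMap.ker_eq_bot']
    exact hx
  have hlen := length_mod x (Algebra.linearMap R S) hinj φ (fun _ => rfl) hφ hC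
  let W : ℕ → Submodule R S := fun i => Submodule.span R ((fun j : ℕ => σ ^ j) '' Set.Iio i)
  obtain ⟨i, hie, hi⟩ := chain_stop (M := S ⧸ LinearMap.range φ) e (by rw [hlen]; exact he)
    (fun i => (W i).map (LinearMap.range φ).mkQ) (fun i => Submodule.map_mono
      (Submodule.span_mono (Set.image_mono (Set.Iio_subset_Iio (Nat.le_succ i)))))
  refine ⟨i, hie, ?_⟩
  have hmem : ∀ j < i, σ ^ j ∈ W i := fun j hj => Submodule.subset_span ⟨j, hj, rfl⟩
  have h1 : σ ^ i ∈ W i ⊔ LinearMap.range φ := by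
    have h2 : (LinearMap.range φ).mkQ (σ ^ i) ∈ (W i).map (LinearMap.range φ).mkQ :=
      hi ⟨σ ^ i, Submodule.subset_span ⟨i, Nat.lt_succ_self i, rfl⟩, rfl⟩
    obtain ⟨w, hw, hw'⟩ := h2
    rw [Submodule.mkQ_apply, Submodule.mkQ_apply, Submodule.Quotient.eq] at hw'
    have := (W i ⊔ LinearMap.range φ).sub_mem (Submodule.mem_sup_left hw) (Submodule.mem_sup_right hw')
    simpa using this
  have htop : W i ⊔ LinearMap.range φ = ⊤ := by
    apply hgen
    · rcases Nat.eq_zero_or_pos i with h0 | h0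
      · subst h0; simpa using h1
      · exact Submodule.mem_sup_left (by simpa using hmem 0 h0)
    · intro n hn
      obtain ⟨w, hw, v, ⟨y, rfl⟩, rfl⟩ := Submodule.mem_sup.1 hn
      rw [mul_add]
      refine add_mem ?_ (Submodule.mem_sup_right ⟨σ * y, ?_⟩)
      · induction hw using Submodule.span_induction with
        | mem w hw =>
          obtain ⟨j, hj, rfl⟩ := hw
          change σ * σ ^ j ∈ _
          rw [← pow_succ']
          rcases Nat.lt_or_ge (j+1) i with h | h
          · exact Submodule.mem_sup_left (hmem _ h)
          · have : j + 1 = i := le_antisymm hj h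
            rw [this]; exact h1
        | zero => rw [mul_zero]; exact zero_mem _
        | add a b _ _ ha hb =>
          rw [mul_add]
          exact add_mem (ha (Submodule.mem_sup.2 ⟨a, ‹_›, _, ⟨y, rfl⟩, rfl⟩))
            (hb (Submodule.mem_sup.2 ⟨b, ‹_›, _, ⟨y, rfl⟩, rfl⟩))
        | smul r a _ ha =>
          rw [mul_smul_comm]
          exact Submodule.smul_mem _ _ (ha (Submodule.mem_sup.2 ⟨a, ‹_›, _, ⟨y, rfl⟩, rfl⟩))
      · change x • (σ * y) = σ * (x • y)
        rw [mul_smul_comm]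
  have hnak : (⊤ : Submodule R S) ≤ W i := by
    refine Submodule.le_of_le_smul_of_le_jacobson_bot (I := maximalIdeal R) Module.Finite.fg_top
      (IsLocalRing.jacobson_eq_maximalIdeal _ bot_ne_top).ge ?_
    rw [← htop]
    refine sup_le le_sup_left ?_
    rintro _ ⟨y, rfl⟩
    refine Submodule.mem_sup_right ?_
    change x • y ∈ _
    rw [htop]
    exact Submodule.smul_mem_smul hxm trivial
  exact hnak trivial

variable {K : Type} [CommRing K] [Algebra R K] [IsFractionRing R K]

lemma bound (hdim : ringKrullDim R = 1) (x : R) (hxm : x ∈ maximalIdeal R)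
    (hx : x ∈ nonZeroDivisors R) (e : ℕ) (he : Module.length R (R ⧸ Ideal.span {x}) ≤ e)
    (n : ℕ) (r : R) (s : K) (hs : s ∈ IC R K)
    (hr : algebraMap R K r = algebraMap R K (x ^ n) * s) : x ^ n ∣ r ^ e := by
  have hs' : IsIntegral R s := hs
  let S := Algebra.adjoin R {s}
  have hfg : (Subalgebra.toSubmodule S).FG := hs'.fg_adjoin_singleton
  have : Module.Finite R S := Module.Finite.iff_fg.2 hfg
  have hinjK : Function.Injective (algebraMap R K) := IsFractionRing.injective R K
  have hxS : ∀ s : S, x • s = 0 → s = 0 := by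
    intro s h
    have h2 : algebraMap R K x * s = 0 := by
      rw [← Algebra.smul_def]; exact congrArg Subtype.val h
    exact Subtype.ext ((IsLocalization.map_units K ⟨x, hx⟩).mul_right_eq_zero.1 h2)
  have hC : Module.length R (S ⧸ LinearMap.range (Algebra.linearMap R S)) ≠ ⊤ := by
    obtain ⟨b, hb, hb'⟩ := FractionalIdeal.isFractional_of_fg (S := nonZeroDivisors R) hfg
    obtain ⟨N, hN⟩ := pow_le_of_nzd hdim b hb
    refine finLen _ ⟨N, fun t ht l => ?_⟩
    obtain ⟨l, rfl⟩ := Submodule.Quotient.mk_surjective _ l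
    obtain ⟨c, rfl⟩ := Ideal.mem_span_singleton.1 (hN ht)
    rw [← Submodule.Quotient.mk_smul, Submodule.Quotient.mk_eq_zero]
    obtain ⟨d, hd⟩ := hb' l l.2
    refine ⟨c * d, Subtype.ext ?_⟩
    change algebraMap R K (c * d) = (b * c) • (l : K)
    rw [map_mul, hd, Algebra.smul_def, Algebra.smul_def, map_mul]
    ring
  obtain ⟨i, hie, hi⟩ := pow_mem_span (S := S) (fun a b h => hinjK (congrArg Subtype.val h)) x hxm hxS hC
    ⟨s, Algebra.self_mem_adjoin_singleton R s⟩ (by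
      intro N h1 hN
      rw [eq_top_iff]
      rintro ⟨t, ht⟩ -
      have key : ∀ p : Polynomial R, ∀ y ∈ N, (Polynomial.aeval
          (⟨s, Algebra.self_mem_adjoin_singleton R s⟩ : S) p) * y ∈ N := by
        intro p
        induction p using Polynomial.induction_on' with
        | add p q hp hq => intro y hy; rw [map_add, add_mul]; exact add_mem (hp y hy) (hq y hy)
        | monomial k a =>
          intro y hy
          rw [Polynomial.aeval_monomial, mul_assoc, ← Algebra.smul_def]
          refine Submodule.smul_mem _ _ ?_
          induction k with
          | zero => simpa using hy
          | succ k ih => rw [pow_succ', mul_assoc]; exact hN _ ih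
      have ht' : t ∈ Algebra.adjoin R {s} := ht
      rw [Algebra.adjoin_singleton_eq_range_aeval] at ht'
      obtain ⟨p, hp⟩ := ht'
      have h2 := key p 1 h1
      rw [mul_one] at h2
      convert h2 using 1
      apply Subtype.ext
      rw [Polynomial.aeval_subalgebra_coe]
      exact hp.symm) e he
  have hW : ∀ w ∈ Submodule.span R ((fun j : ℕ => (⟨s, Algebra.self_mem_adjoin_singleton R s⟩ : S) ^ j) ''
      Set.Iio i), ∃ t : R, algebraMap R K (x ^ n * t) = algebraMap R K (x ^ n) ^ i * (w : K) := by
    intro w hw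
    induction hw using Submodule.span_induction with
    | mem w hw =>
      obtain ⟨j, hj, rfl⟩ := hw
      have hj' : j < i := hj
      refine ⟨(x ^ n) ^ (i - j - 1) * r ^ j, ?_⟩
      change _ = algebraMap R K (x ^ n) ^ i * s ^ j
      obtain ⟨d, rfl⟩ : ∃ d, i = j + d + 1 := ⟨i - j - 1, by omega⟩
      have hd : j + d + 1 - j - 1 = d := by omega
      rw [hd, map_mul, map_mul, map_pow _ r, hr, map_pow _ (x ^ n)]
      ring
    | zero => exact ⟨0, by simp⟩
    | add a b _ _ ha hb =>
      obtain ⟨t, ht⟩ := ha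
      obtain ⟨u, hu⟩ := hb
      refine ⟨t + u, ?_⟩
      rw [mul_add, map_add, ht, hu, Subalgebra.coe_add, mul_add]
    | smul c a _ ha =>
      obtain ⟨t, ht⟩ := ha
      refine ⟨c * t, ?_⟩
      rw [mul_left_comm, map_mul, ht, Subalgebra.coe_smul, Algebra.smul_def]
      ring
  obtain ⟨t, ht⟩ := hW _ hi
  have h3 : r ^ i = x ^ n * t := by
    apply hinjK
    rw [ht, map_pow, hr, mul_pow]
    rfl
  exact (Dvd.intro t h3.symm).trans (pow_dvd_pow r hie)
end Finiteness
section Finiteness2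
set_option linter.unusedSectionVars false
variable {R : Type} [CommRing R] [IsLocalRing R] [IsNoetherianRing R]
variable (K : Type) [CommRing K] [Algebra R K] [IsFractionRing R K]

/-- `x ^ n * IC` intersected with `R` -/
def InI (x : R) (n : ℕ) : Ideal R :=
  ((IC R K).map (LinearMap.mulLeft R (algebraMap R K (x ^ n)))).comap (Algebra.linearMap R K)

lemma mem_InI (x : R) (n : ℕ) (r : R) : r ∈ InI K x n ↔
    ∃ s ∈ IC R K, algebraMap R K r = algebraMap R K (x ^ n) * s := by
  constructor
  · rintro ⟨s, hs, h⟩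
    exact ⟨s, hs, h.symm⟩
  · rintro ⟨s, hs, h⟩
    exact ⟨s, hs, h.symm⟩

lemma InI_anti (x : R) {n m : ℕ} (h : n ≤ m) : InI K x m ≤ InI K x n := by
  intro r hr
  rw [mem_InI] at hr ⊢
  obtain ⟨s, hs, h1⟩ := hr
  refine ⟨(x ^ (m - n)) • s, Submodule.smul_mem _ _ hs, ?_⟩
  rw [h1, Algebra.smul_def, ← mul_assoc, ← map_mul, ← pow_add]
  congr 3
  omega

lemma stab (hdim : ringKrullDim R = 1) (x : R) (hx : x ∈ nonZeroDivisors R) (j : ℕ) :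
    ∃ ν, ∀ n, ν ≤ n → ∀ a ∈ InI K x ν, ∃ b ∈ InI K x n, x ^ j ∣ a - b := by
  have hlen : Module.length R (R ⧸ Ideal.span {x ^ j}) ≠ ⊤ := by
    obtain ⟨N, hN⟩ := pow_le_of_nzd hdim (x ^ j) (pow_mem hx j)
    refine finLen _ ⟨N, fun t ht l => ?_⟩
    obtain ⟨l, rfl⟩ := Submodule.Quotient.mk_surjective _ l
    rw [← Submodule.Quotient.mk_smul, Submodule.Quotient.mk_eq_zero, smul_eq_mul]
    exact Ideal.mul_mem_right _ _ (hN ht)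
  rw [Module.length_ne_top_iff, isFiniteLength_iff_isNoetherian_isArtinian] at hlen
  have := hlen.2
  let f : ℕ →o (Submodule R (R ⧸ Ideal.span {x ^ j}))ᵒᵈ :=
    ⟨fun n => OrderDual.toDual (Submodule.map (Ideal.span {x ^ j}).mkQ (InI K x n)),
      fun n m h => Submodule.map_mono (InI_anti K x h)⟩
  obtain ⟨ν, hν⟩ := IsArtinian.monotone_stabilizes f
  refine ⟨ν, fun n hn a ha => ?_⟩
  have h1 : Submodule.map (Ideal.span {x ^ j}).mkQ (InI K x ν) =
    Submodule.map (Ideal.span {x ^ j}).mkQ (InI K x n) := hν n hn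
  have h2 : (Ideal.span {x ^ j}).mkQ a ∈ Submodule.map (Ideal.span {x ^ j}).mkQ (InI K x ν) :=
    ⟨a, ha, rfl⟩
  rw [h1] at h2
  obtain ⟨b, hb, h3⟩ := h2
  refine ⟨b, hb, ?_⟩
  rw [Submodule.mkQ_apply, Submodule.mkQ_apply, eq_comm, Submodule.Quotient.eq,
    Ideal.mem_span_singleton] at h3
  exact h3

lemma exists_le (hau : AnalyticallyUnramified R) (hdim : ringKrullDim R = 1) (x : R)
    (hxm : x ∈ maximalIdeal R) (hx : x ∈ nonZeroDivisors R) :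
    ∃ n, InI K x n ≤ Ideal.span {x} := by
  by_contra hcon
  push Not at hcon
  choose ν hν using stab K hdim x hx
  let T : ℕ → ℕ := fun j => j + ∑ i ∈ Finset.range (j + 1), ν i
  have hTj : ∀ j, j ≤ T j := fun j => Nat.le_add_right _ _
  have hTν : ∀ j, ν j ≤ T j := fun j =>
    (Finset.single_le_sum (f := ν) (fun _ _ => Nat.zero_le _)
      (Finset.mem_range.2 (Nat.lt_succ_self j))).trans (Nat.le_add_left _ _)
  have hTm : ∀ j, T j ≤ T (j+1) := by
    intro j
    change j + _ ≤ j + 1 + _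
    rw [Finset.sum_range_succ _ (j+1)]
    omega
  have step : ∀ j, ∀ a ∈ InI K x (T (j+1)), ∃ b ∈ InI K x (T (j+2)), x ^ (j+1) ∣ a - b := fun j a ha =>
    hν (j+1) (T (j+2)) ((hTν _).trans (hTm _)) a (InI_anti K x (hTν _) ha)
  choose g hg1 hg2 using step
  obtain ⟨r0, hr0, hr0'⟩ := SetLike.not_le_iff_exists.1 (hcon (T 1))
  let q : (j : ℕ) → {r : R // r ∈ InI K x (T (j+1))} := fun j =>
    Nat.rec ⟨r0, hr0⟩ (fun j p => ⟨g j p.1 p.2, hg1 j p.1 p.2⟩) j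
  let r : ℕ → R := fun j => (q j).1
  have hr : ∀ j, r j ∈ InI K x (T (j+1)) := fun j => (q j).2
  have hrs : ∀ j, x ^ (j+1) ∣ r j - r (j+1) := fun j => hg2 j (q j).1 (q j).2
  have hrx : ∀ j, ¬ x ∣ r j := by
    intro j
    induction j with
    | zero => rwa [Ideal.mem_span_singleton] at hr0'
    | succ j ih =>
      intro h
      apply ih
      have h1 : x ∣ r j - r (j+1) := (dvd_pow_self x (Nat.succ_ne_zero j)).trans (hrs j)
      have := dvd_add h1 h
      simpa using this
  have hlen : Module.length R (R ⧸ Ideal.span {x}) ≠ ⊤ := by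
    obtain ⟨N, hN⟩ := pow_le_of_nzd hdim x hx
    refine finLen _ ⟨N, fun t ht l => ?_⟩
    obtain ⟨l, rfl⟩ := Submodule.Quotient.mk_surjective _ l
    rw [← Submodule.Quotient.mk_smul, Submodule.Quotient.mk_eq_zero, smul_eq_mul]
    exact Ideal.mul_mem_right _ _ (hN ht)
  obtain ⟨e, he⟩ := ENat.ne_top_iff_exists.1 hlen
  have hre : ∀ j, r j ^ e ∈ maximalIdeal R ^ j := by
    intro j
    obtain ⟨s, hs, h⟩ := (mem_InI K x j (r j)).1
      (InI_anti K x ((Nat.le_succ j).trans (hTj (j+1))) (hr j))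
    exact Ideal.mem_of_dvd _ (bound hdim x hxm hx e he.ge j (r j) s hs h) (Ideal.pow_mem_pow hxm j)
  let c : AdicCompletion.AdicCauchySequence (maximalIdeal R) R :=
    AdicCompletion.AdicCauchySequence.mk (maximalIdeal R) R r (fun n => by
      rw [SModEq.sub_mem, smul_eq_mul, Ideal.mul_top]
      exact Ideal.mem_of_dvd _ ((pow_dvd_pow x (Nat.le_succ n)).trans (hrs n)) (Ideal.pow_mem_pow hxm n))
  have hc : ∀ n, AdicCompletion.evalₐ (maximalIdeal R) n (AdicCompletion.mk (maximalIdeal R) R c) =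
      Ideal.Quotient.mk _ (r n) := fun n => AdicCompletion.evalₐ_mk _ n c
  have h0 : (AdicCompletion.mk (maximalIdeal R) R c) ^ e = 0 := by
    apply AdicCompletion.ext_evalₐ
    intro n
    rw [map_pow, hc, map_zero, ← map_pow, Ideal.Quotient.eq_zero_iff_mem]
    exact hre n
  have : IsReduced (AdicCompletion (maximalIdeal R) R) := hau
  have h1 : AdicCompletion.mk (maximalIdeal R) R c = 0 := eq_zero_of_pow_eq_zero h0
  obtain ⟨N, hN⟩ := pow_le_of_nzd hdim x hx
  have h2 := hc N
  rw [h1, map_zero, eq_comm, Ideal.Quotient.eq_zero_iff_mem] at h2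
  exact hrx N (Ideal.mem_span_singleton.1 (hN h2))

lemma exists_cond (hau : AnalyticallyUnramified R) (hdim : ringKrullDim R = 1) (x : R)
    (hxm : x ∈ maximalIdeal R) (hx : x ∈ nonZeroDivisors R) :
    ∃ n, ∀ a ∈ IC R K, ∃ r, algebraMap R K r = algebraMap R K (x ^ n) * a := by
  obtain ⟨n, hn⟩ := exists_le K hau hdim x hxm hx
  refine ⟨n, fun d hd => ?_⟩
  have hex : ∃ k, ∃ r, algebraMap R K r = algebraMap R K (x ^ k) * d := by
    obtain ⟨⟨a, b⟩, hab⟩ := IsLocalization.surj (nonZeroDivisors R) d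
    obtain ⟨N, hN⟩ := pow_le_of_nzd hdim b.1 b.2
    obtain ⟨t, ht⟩ := Ideal.mem_span_singleton.1 (hN (Ideal.pow_mem_pow hxm N))
    refine ⟨N, t * a, ?_⟩
    rw [ht, map_mul, map_mul]
    simp only at hab
    rw [← hab]
    ring
  classical
  have key : ∀ k, (∃ r, algebraMap R K r = algebraMap R K (x ^ (n + k)) * d) →
      ∃ r, algebraMap R K r = algebraMap R K (x ^ n) * d := by
    intro k
    induction k with
    | zero => exact id
    | succ k ih =>
      rintro ⟨r, hr⟩
      apply ih
      have h1 : r ∈ InI K x n := InI_anti K x (Nat.le_add_right n (k+1)) ((mem_InI K x _ r).2 ⟨d, hd, hr⟩)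
      obtain ⟨t, rfl⟩ := Ideal.mem_span_singleton.1 (hn h1)
      refine ⟨t, (IsLocalization.map_units K (⟨x, hx⟩ : nonZeroDivisors R)).mul_left_cancel ?_⟩
      simp only
      rw [← map_mul, hr, ← mul_assoc, ← map_mul, ← pow_succ']
      rfl
  obtain ⟨k, r, hr⟩ := hex
  apply key k
  refine ⟨x ^ n * r, ?_⟩
  rw [map_mul, hr, pow_add, map_mul, mul_assoc]

/-- everything we need about the conductor -/
lemma fin_all (hau : AnalyticallyUnramified R) (hdim : ringKrullDim R = 1) :
    ∃ z ∈ nonZeroDivisors R, (∀ a ∈ IC R K, ∃ r, algebraMap R K r = algebraMap R K z * a) ∧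
      (IC R K).FG ∧ ∃ b : Ideal R, z ∈ b ∧ Nonempty (b ≃ₗ[R] IC R K) := by
  have := reduced_of_au hau
  obtain ⟨x, hxm, hx⟩ := exists_nzd_max (R := R) hdim
  obtain ⟨n, hn⟩ := exists_cond K hau hdim x hxm hx
  have hz : x ^ n ∈ nonZeroDivisors R := pow_mem hx n
  have hinj : Function.Injective (LinearMap.mulLeft R (algebraMap R K (x ^ n))) := by
    intro a b h
    exact (IsLocalization.map_units K (⟨x ^ n, hz⟩ : nonZeroDivisors R)).mul_left_cancel h
  have hmap : Submodule.map (Algebra.linearMap R K) (InI K x n) =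
      (IC R K).map (LinearMap.mulLeft R (algebraMap R K (x ^ n))) := by
    apply Submodule.map_comap_eq_self
    rintro _ ⟨a, ha, rfl⟩
    exact hn a ha
  let E : InI K x n ≃ₗ[R] IC R K :=
    (Submodule.equivMapOfInjective (Algebra.linearMap R K) (IsFractionRing.injective R K) _).trans
    ((LinearEquiv.ofEq _ _ hmap).trans
      (Submodule.equivMapOfInjective _ hinj (IC R K)).symm)
  refine ⟨x ^ n, hz, hn, ?_, InI K x n, ?_, ⟨E⟩⟩
  · exact Module.Finite.iff_fg.1 (Module.Finite.equiv E)
  · exact (mem_InI K x n _).2 ⟨1, one_mem (integralClosure R K), (mul_one _).symm⟩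
end Finiteness2
section Final
set_option linter.unusedSectionVars false

lemma mem_cond {R : Type} [CommRing R] (r : R) : r ∈ conductorIdeal R ↔
    ∀ a ∈ IC R (FractionRing R), ∃ t, algebraMap R (FractionRing R) t =
      algebraMap R (FractionRing R) r * a := by
  unfold conductorIdeal
  rw [Module.mem_annihilator]
  constructor
  · intro h a ha
    have h1 := h (Submodule.Quotient.mk (⟨a, ha⟩ : IntClosure R))
    rw [← Submodule.Quotient.mk_smul, Submodule.Quotient.mk_eq_zero] at h1
    obtain ⟨t, ht⟩ := h1
    refine ⟨t, ?_⟩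
    have := congrArg Subtype.val ht
    rw [← Algebra.smul_def]
    exact this
  · intro h m
    obtain ⟨a, rfl⟩ := Submodule.Quotient.mk_surjective _ m
    rw [← Submodule.Quotient.mk_smul, Submodule.Quotient.mk_eq_zero]
    obtain ⟨t, ht⟩ := h a.1 a.2
    refine ⟨t, Subtype.ext ?_⟩
    rw [← Algebra.smul_def] at ht
    exact ht

lemma cond_stable {R : Type} [CommRing R] (I : Ideal R) :
    IC R (FractionRing R) * Submodule.map (Algebra.linearMap R (FractionRing R)) (I * conductorIdeal R) ≤
      Submodule.map (Algebra.linearMap R (FractionRing R)) (I * conductorIdeal R) := by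
  rw [Submodule.mul_le]
  rintro a ha _ ⟨y, hy', rfl⟩
  change y ∈ I * conductorIdeal R at hy'
  induction hy' using Submodule.mul_induction_on' with
  | mem_mul_mem i hi c hc =>
    obtain ⟨t, ht⟩ := (mem_cond c).1 hc a ha
    refine ⟨i * t, Ideal.mul_mem_mul hi ((mem_cond t).2 fun b hb => ?_), ?_⟩
    · obtain ⟨u, hu⟩ := (mem_cond c).1 hc (a * b) (Subalgebra.mul_mem (integralClosure R (FractionRing R)) ha hb)
      exact ⟨u, by rw [hu, ht, mul_assoc]⟩
    · rw [Algebra.linearMap_apply, Algebra.linearMap_apply, map_mul, map_mul, ht]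
      ring
  | add y hy z hz h1 h2 =>
    rw [map_add, mul_add]
    exact add_mem h1 h2

variable {R : Type} [CommRing R] [IsLocalRing R] [IsNoetherianRing R]

lemma map_le_IC (I : Ideal R) :
    Submodule.map (Algebra.linearMap R (FractionRing R)) I ≤ IC R (FractionRing R) := by
  rintro _ ⟨y, _, rfl⟩
  exact (integralClosure R (FractionRing R)).algebraMap_mem y

lemma toGor (hau : AnalyticallyUnramified R) (hdim : ringKrullDim R = 1)
    (X : Submodule R (FractionRing R)) (hX : X ≤ IC R (FractionRing R))
    (hAX : IC R (FractionRing R) * X ≤ X) (w : R) (hw : w ∈ nonZeroDivisors R)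
    (hwX : algebraMap R (FractionRing R) w ∈ X) (i : ℕ) (hi : 0 < i) (h : EV R X R i) :
    IsGorensteinLocal R := by
  have := reduced_of_au hau
  obtain ⟨x, hxm, hx⟩ := exists_nzd_max (R := R) hdim
  obtain ⟨z, hz, hzc, hfg, -⟩ := fin_all (FractionRing R) hau hdim
  have hzc' : z ∈ conductorIdeal R := (mem_cond z).2 hzc
  obtain ⟨i, rfl⟩ := Nat.exists_eq_succ_of_ne_zero hi.ne'
  refine engine_gor (fun z hz => pow_le_of_nzd hdim z hz) (conductorIdeal R) z hzc' hz i fun n => ?_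
  have hy : x ^ n * z ∈ nonZeroDivisors R := mul_mem (pow_mem hx n) hz
  have hX1 := invert hfg X hX hAX w hw hwX (pow_le_of_nzd hdim w hw)
  have hJ1 := invert hfg (Submodule.map (Algebra.linearMap R (FractionRing R))
    (maximalIdeal R ^ n * conductorIdeal R)) (map_le_IC _) (cond_stable _) (x ^ n * z) hy
    ⟨x ^ n * z, Ideal.mul_mem_mul (Ideal.pow_mem_pow hxm n) hzc', rfl⟩ (pow_le_of_nzd hdim _ hy)
  have h2 := transfer X _ hAX (cond_stable _) hX1 hJ1 (i+1) h
  exact EV_congr (Submodule.equivMapOfInjective (Algebra.linearMap R (FractionRing R))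
    (IsFractionRing.injective R (FractionRing R)) _).symm _ h2
end Final

-- STATEMENT 9
theorem stmt9 (R : Type) [CommRing R] [IsLocalRing R] [IsNoetherianRing R]
    (hau : AnalyticallyUnramified R) (hdim : ringKrullDim R = 1) :
    [∃ i : ℕ, 0 < i ∧ Subsingleton (ExtMod R ↥(conductorIdeal R) R i),
     IsGorensteinLocal R,
     ∀ i : ℕ, 0 < i → Subsingleton (ExtMod R (IntClosure R) R i),
     ∃ i : ℕ, 0 < i ∧ Subsingleton (ExtMod R (IntClosure R) R i)].TFAE := by
  have := reduced_of_au hau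
  obtain ⟨x, hxm, hx⟩ := exists_nzd_max (R := R) hdim
  obtain ⟨z, hz, hzc, hfg, b, hzb, ⟨E⟩⟩ := fin_all (FractionRing R) hau hdim
  have hzc' : z ∈ conductorIdeal R := (mem_cond z).2 hzc
  tfae_have 1 → 2 := by
    rintro ⟨i, hi, h⟩
    have h1 := (extMod_iff _ _ i hi).1 h
    have hs := cond_stable (⊤ : Ideal R)
    rw [Ideal.top_mul] at hs
    exact toGor hau hdim (Submodule.map (Algebra.linearMap R (FractionRing R)) (conductorIdeal R))
      (map_le_IC _) hs z hz ⟨z, hzc', rfl⟩ i hi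
      (EV_congr (Submodule.equivMapOfInjective (Algebra.linearMap R (FractionRing R))
        (IsFractionRing.injective R (FractionRing R)) _) _ h1)
  tfae_have 2 → 1 := fun hG => ⟨1, one_pos, (extMod_iff _ _ 1 one_pos).2
    (gor_vanish hG hdim x hxm hx (conductorIdeal R) z hzc' hz 1 one_pos)⟩
  tfae_have 2 → 3 := fun hG i hi => (extMod_iff _ _ i hi).2
    (EV_congr (M₂ := IntClosure R) E i (gor_vanish hG hdim x hxm hx b z hzb hz i hi))
  tfae_have 3 → 4 := fun h => ⟨1, one_pos, h 1 one_pos⟩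
  tfae_have 4 → 2 := by
    rintro ⟨i, hi, h⟩
    have h1 := (extMod_iff _ _ i hi).1 h
    refine toGor hau hdim (IC R (FractionRing R)) le_rfl ?_ 1 (one_mem _) ?_ i hi h1
    · rw [Submodule.mul_le]
      intro a ha c hc
      exact Subalgebra.mul_mem (integralClosure R (FractionRing R)) ha hc
    · exact (integralClosure R (FractionRing R)).algebraMap_mem 1
  tfae_finish
end
end

section
/- Let (R, m) be an analytically unramified Cohen–Macaulay local ring of dimension d with integral closure R̄ and conductor ideal 𝔠, and let x_1, …, x_d be a system of parameters of R. Then 𝔠 annihilates Tor^R_i(R̄, R/(x_1, …, x_d)R) for every i > 0. -/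
open CategoryTheory IsLocalRing

set_option synthInstance.maxHeartbeats 1000000
set_option maxHeartbeats 1000000

noncomputable section

lemma smul_aux (R : Type) [CommRing R] {M N : ModuleCat.{0} R} (e : M ≅ N) (c : R)
    (h0 : c • 𝟙 N = 0) (t : M) : c • t = 0 := by
  have h1 : c • 𝟙 M = 0 := by
    rw [← e.hom_inv_id, ← Category.id_comp e.inv, ← Linear.comp_smul, ← Linear.smul_comp, h0,
      Limits.zero_comp, Limits.comp_zero]
  exact congrArg (fun k => k.hom t) h1

lemma tor_aux (R : Type) [CommRing R] (X Y : ModuleCat.{0} R) (c : R)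
    (f : X ⟶ MonoidalCategoryStruct.tensorUnit (ModuleCat.{0} R))
    (g : MonoidalCategoryStruct.tensorUnit (ModuleCat.{0} R) ⟶ X)
    (h : f ≫ g = c • 𝟙 X) (n : ℕ) (t : ↥(((Tor (ModuleCat.{0} R) (n + 1)).obj X).obj Y)) :
    c • t = 0 := by
  let P := projectiveResolution Y
  let T := MonoidalCategory.tensoringLeft (ModuleCat.{0} R)
  let K := ((T.obj X).mapHomologicalComplex (ComplexShape.down ℕ)).obj P.complex
  let L := ((T.obj (MonoidalCategoryStruct.tensorUnit _)).mapHomologicalComplex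
    (ComplexShape.down ℕ)).obj P.complex
  let A : K ⟶ L := (NatTrans.mapHomologicalComplex (T.map f) _).app P.complex
  let B : L ⟶ K := (NatTrans.mapHomologicalComplex (T.map g) _).app P.complex
  have hAB : A ≫ B = c • 𝟙 K := by
    ext1 i
    change MonoidalCategoryStruct.whiskerRight f _ ≫ MonoidalCategoryStruct.whiskerRight g _ = _
    rw [← MonoidalCategory.comp_whiskerRight, h, MonoidalLinear.smul_whiskerRight,
      MonoidalCategory.id_whiskerRight]
    rfl
  have hL : Limits.IsZero (L.homology (n + 1)) := by
    apply HomologicalComplex.ExactAt.isZero_homology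
    have e : L ≅ P.complex := HomologicalComplex.Hom.isoOfComponents
      (fun i => MonoidalCategory.leftUnitor (P.complex.X i)) (by
        intro i j _
        exact (MonoidalCategory.leftUnitor_naturality (P.complex.d i j)).symm)
    exact (P.complex_exactAt_succ n).of_iso e.symm
  have h0 : c • 𝟙 (K.homology (n + 1)) = 0 := by
    have h1 : HomologicalComplex.homologyMap (A ≫ B) (n + 1) = 0 := by
      rw [HomologicalComplex.homologyMap_comp, hL.eq_of_tgt
        (HomologicalComplex.homologyMap A (n + 1)) 0, Limits.zero_comp]
    have h2 : HomologicalComplex.homologyMap (c • 𝟙 K) (n + 1) = c • 𝟙 (K.homology (n + 1)) := by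
      have := ShortComplex.homologyMap_smul (𝟙 (K.sc (n + 1))) c
      rw [ShortComplex.homologyMap_id] at this
      exact this
    rw [← h2, ← hAB, h1]
  let e : ((Tor (ModuleCat.{0} R) (n + 1)).obj X).obj Y ≅ K.homology (n + 1) :=
    P.isoLeftDerivedObj (T.obj X) (n + 1)
  exact smul_aux R e c h0 t

-- STATEMENT 13
theorem stmt13 (R : Type) [CommRing R] [IsLocalRing R] [IsNoetherianRing R]
    (hau : AnalyticallyUnramified R) (hcm : IsCohenMacaulayLocal R)
    {d : ℕ} (x : Fin d → R) (hx : IsSystemOfParameters R x) :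
    ∀ i : ℕ, 0 < i →
      conductorIdeal R ≤ Module.annihilator R
        ↥(((Tor (ModuleCat.{0} R) i).obj (ModuleCat.of R (IntClosure R))).obj
          (ModuleCat.of R (R ⧸ Ideal.span (Set.range x)))) := by
  intro i hi c hc
  obtain ⟨n, rfl⟩ := Nat.exists_eq_succ_of_ne_zero hi.ne'
  rw [Module.mem_annihilator]
  intro t
  have hinj : Function.Injective (Algebra.linearMap R (IntClosure R)) := by
    intro a b hab
    exact IsFractionRing.injective R (FractionRing R) (congrArg Subtype.val hab)
  have hmem : ∀ y : IntClosure R, c • y ∈ LinearMap.range (Algebra.linearMap R (IntClosure R)) := by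
    intro y
    have := Module.mem_annihilator.1 hc (Submodule.Quotient.mk y)
    rwa [← Submodule.Quotient.mk_smul, Submodule.Quotient.mk_eq_zero] at this
  let φ : IntClosure R →ₗ[R] R :=
    (LinearEquiv.ofInjective _ hinj).symm.toLinearMap ∘ₗ
      (LinearMap.codRestrict _ (LinearMap.lsmul R (IntClosure R) c) hmem)
  have hφ : ∀ y, Algebra.linearMap R (IntClosure R) (φ y) = c • y := by
    intro y
    exact congrArg Subtype.val ((LinearEquiv.ofInjective _ hinj).apply_symm_apply
      (LinearMap.codRestrict _ (LinearMap.lsmul R (IntClosure R) c) hmem y))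
  exact tor_aux R (ModuleCat.of R (IntClosure R)) _ c (ModuleCat.ofHom φ)
    (ModuleCat.ofHom (Algebra.linearMap R (IntClosure R)))
    (by ext1; exact LinearMap.ext hφ) n t
end
end
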